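/- Suppose A = kQ/I is a symmetric special biserial k-algebra, where Q is a connected quiver with exactly two vertices (labeled 1 and 2) and I is an admissible ideal. Then A is isomorphic to one of the following quotients of path algebras, for suitable positive integers m, p, q, r for which the listed relations generate an admissible ideal: (1) Q has arrows α: 1→2, β: 2→1, with relations (αβ)^m α = 0 and (βα)^m β = 0; (2) Q has arrows α: 1→2, β: 2→1 and a loop γ at 1, with relations either (2a) βγ = γα = 0 and γ^p = (αβ)^q, or (2b) βα = γ² = 0 and (γαβ)^m = (αβγ)^m; (3) Q has arrows α, α′: 1→2 and β, β′: 2→1, with relations either (3a) αβ′ = β′α = α′β = βα′ = 0, (αβ)^p = (α′β′)^q and (βα)^p = (β′α′)^q, or (3b) αβ′ = βα = α′β = β′α′ = 0, (αβα′β′)^m = (α′β′αβ)^m and (βα′β′α)^m = (β′αβα′)^m; (4) Q has arrows α: 1→2, β: 2→1 and loops γ at 1 and δ at 2, with relations either (4a) βγ = γα = αδ = δβ = 0, (αβ)^p = γ^q and (βα)^p = δ^r, or (4b) βα = γ² = αδ = δβ = 0, (γαβ)^p = (αβγ)^p and (βγα)^p = δ^q, or (4c) αβ = βα = γ² = δ²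 = 0, (βγαδ)^m = (δβγα)^m and (γαδβ)^m = (αδβγ)^m. -/

import Mathlib

namespace QH
noncomputable section
section

/-! ### Path algebras of quivers, admissible ideals, special biserial algebras -/

/-- Generators for the path algebra of a quiver: an idempotent for each vertex and a generator
for each arrow. -/
inductive PGen (V E : Type) : Type
  | vert : V → PGen V E
  | arr : E → PGen V E

/-- Defining relations of the path algebra `kQ` of the quiver `Q = (V, E, s, t)`:
the vertex idempotents are orthogonal idempotents summing to `1`, and
`e_{s(a)} · a = a = a · e_{t(a)}` for every arrow `a` (paths composed left to right). -/
inductive PathRel (k : Type) [CommRing k] (V E : Type) [Fintype V] [DecidableEq V] (s t : E → V) :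
    FreeAlgebra k (PGen V E) → FreeAlgebra k (PGen V E) → Prop
  | vv (x y : V) : PathRel k V E s t
      (FreeAlgebra.ι k (PGen.vert x) * FreeAlgebra.ι k (PGen.vert y))
      (if x = y then FreeAlgebra.ι k (PGen.vert x) else 0)
  | sum_v : PathRel k V E s t (∑ x : V, FreeAlgebra.ι k (PGen.vert x)) 1
  | src (e : E) : PathRel k V E s t
      (FreeAlgebra.ι k (PGen.vert (s e)) * FreeAlgebra.ι k (PGen.arr e))
      (FreeAlgebra.ι k (PGen.arr e))
  | tgt (e : E) : PathRel k V E s t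
      (FreeAlgebra.ι k (PGen.arr e) * FreeAlgebra.ι k (PGen.vert (t e)))
      (FreeAlgebra.ι k (PGen.arr e))

/-- The path algebra `kQ` of a finite quiver. -/
abbrev PathAlg (k : Type) [CommRing k] (V E : Type) [Fintype V] [DecidableEq V] (s t : E → V) : Type :=
  RingQuot (PathRel k V E s t)

/-- The image in `kQ` of a vertex idempotent. -/
def pV (k : Type) [CommRing k] {V E : Type} [Fintype V] [DecidableEq V] (s t : E → V) (x : V) :
    PathAlg k V E s t := RingQuot.mkAlgHom k _ (FreeAlgebra.ι k (PGen.vert x))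

/-- The image in `kQ` of an arrow. -/
def pA (k : Type) [CommRing k] {V E : Type} [Fintype V] [DecidableEq V] (s t : E → V) (e : E) :
    PathAlg k V E s t := RingQuot.mkAlgHom k _ (FreeAlgebra.ι k (PGen.arr e))

/-- The arrow ideal `kQ⁺` of the path algebra (the two-sided ideal generated by the arrows),
as a `k`-submodule. -/
def arrowIdeal (k : Type) [CommRing k] {V E : Type} [Fintype V] [DecidableEq V] (s t : E → V) :
    Submodule k (PathAlg k V E s t) :=
  ⊤ * Submodule.span k (Set.range (pA k s t)) * ⊤

/-- A `k`-submodule of an algebra is a two-sided ideal. -/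
def IsTwoSidedSub {k A : Type} [CommRing k] [Ring A] [Algebra k A] (I : Submodule k A) : Prop :=
  ∀ x ∈ I, ∀ a : A, a * x ∈ I ∧ x * a ∈ I

/-- An ideal `I ⊆ kQ` is admissible if it is two-sided and `(kQ⁺)^N ⊆ I ⊆ (kQ⁺)²`
for some `N`. -/
def IsAdmissible (k : Type) [CommRing k] {V E : Type} [Fintype V] [DecidableEq V] (s t : E → V)
    (I : Submodule k (PathAlg k V E s t)) : Prop :=
  IsTwoSidedSub I ∧ I ≤ arrowIdeal k s t ^ 2 ∧ ∃ N : ℕ, arrowIdeal k s t ^ N ≤ I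

/-- The quotient algebra `kQ/I`. -/
abbrev PathQuot (k : Type) [CommRing k] {V E : Type} [Fintype V] [DecidableEq V] (s t : E → V)
    (I : Submodule k (PathAlg k V E s t)) : Type :=
  RingQuot (fun a b : PathAlg k V E s t => a - b ∈ I)

/-- The quotient map `kQ → kQ/I`. -/
def pathQuotMap (k : Type) [CommRing k] {V E : Type} [Fintype V] [DecidableEq V] (s t : E → V)
    (I : Submodule k (PathAlg k V E s t)) : PathAlg k V E s t →ₐ[k] PathQuot k s t I :=
  RingQuot.mkAlgHom k _

/-- A quiver is connected if its underlying undirected graph is. -/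
def QConnected {V E : Type} (s t : E → V) : Prop :=
  ∀ v w : V, Relation.ReflTransGen (fun a b => ∃ e, (s e = a ∧ t e = b) ∨ (s e = b ∧ t e = a)) v w

/-- A surjection `π : kQ → A` presents `A` as a special biserial algebra if at most two arrows
start and at most two arrows end at each vertex, and for each arrow `α` there is at most one
arrow `β` with `αβ ∉ ker π` and at most one arrow `γ` with `γα ∉ ker π`. -/
def SpecialBiserialPres (k : Type) [CommRing k] {V E : Type} [Fintype V] [Fintype E]
    [DecidableEq V] [DecidableEq E] (s t : E → V) {A : Type} [Ring A] [Algebra k A]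
    (π : PathAlg k V E s t →ₐ[k] A) : Prop :=
  (∀ v : V, (Finset.univ.filter fun e : E => s e = v).card ≤ 2) ∧
  (∀ v : V, (Finset.univ.filter fun e : E => t e = v).card ≤ 2) ∧
  (∀ e f f' : E, π (pA k s t e * pA k s t f) ≠ 0 → π (pA k s t e * pA k s t f') ≠ 0 → f = f') ∧
  (∀ e f f' : E, π (pA k s t f * pA k s t e) ≠ 0 → π (pA k s t f' * pA k s t e) ≠ 0 → f = f')

/-- The algebra presented by a quiver together with a set of relations. -/
inductive PresRel (k : Type) [CommRing k] (V E : Type) [Fintype V] [DecidableEq V] (s t : E → V)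
    (rels : Set (FreeAlgebra k (PGen V E))) :
    FreeAlgebra k (PGen V E) → FreeAlgebra k (PGen V E) → Prop
  | base {x y : FreeAlgebra k (PGen V E)} : PathRel k V E s t x y → PresRel k V E s t rels x y
  | rel {x : FreeAlgebra k (PGen V E)} : x ∈ rels → PresRel k V E s t rels x 0

/-- The quotient of the path algebra `kQ` by the two-sided ideal generated by `rels`. -/
abbrev PresAlg (k : Type) [CommRing k] (V E : Type) [Fintype V] [DecidableEq V] (s t : E → V)
    (rels : Set (FreeAlgebra k (PGen V E))) : Type :=
  RingQuot (PresRel k V E s t rels)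

/-- The canonical map `kQ → kQ/(rels)`. -/
def presQuotMap (k : Type) [CommRing k] {V E : Type} [Fintype V] [DecidableEq V] (s t : E → V)
    (rels : Set (FreeAlgebra k (PGen V E))) : PathAlg k V E s t →ₐ[k] PresAlg k V E s t rels :=
  RingQuot.liftAlgHom k ⟨RingQuot.mkAlgHom k _,
    fun _ _ h => RingQuot.mkAlgHom_rel k (PresRel.base h)⟩

/-- The two-sided ideal of `kQ` generated by the set of relations `rels` is admissible. -/
def RelsAdmissible (k : Type) [CommRing k] {V E : Type} [Fintype V] [DecidableEq V] (s t : E → V)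
    (rels : Set (FreeAlgebra k (PGen V E))) : Prop :=
  IsAdmissible k s t
    ((RingHom.ker (presQuotMap k s t rels).toRingHom).restrictScalars k)

end

section TwoVertex
variable (k : Type) [CommRing k]

/-- Arrow generators in the free algebra presenting a two-vertex quiver algebra. -/
def fa2 (E : Type) (e : E) : FreeAlgebra k (PGen (Fin 2) E) := FreeAlgebra.ι k (PGen.arr e)

/-- Quiver (1): arrows `α : 1 → 2` and `β : 2 → 1`. -/
def src1 : Fin 2 → Fin 2 := ![0, 1]
def tgt1 : Fin 2 → Fin 2 := ![1, 0]
/-- Relations `(αβ)^m α = 0`, `(βα)^m β = 0`. -/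
def rels1 (m : ℕ) : Set (FreeAlgebra k (PGen (Fin 2) (Fin 2))) :=
  {(fa2 k (Fin 2) 0 * fa2 k (Fin 2) 1) ^ m * fa2 k (Fin 2) 0,
   (fa2 k (Fin 2) 1 * fa2 k (Fin 2) 0) ^ m * fa2 k (Fin 2) 1}

/-- Quiver (2): arrows `0 = α : 1 → 2`, `1 = β : 2 → 1` and a loop `2 = γ` at `1`. -/
def src2 : Fin 3 → Fin 2 := ![0, 1, 0]
def tgt2 : Fin 3 → Fin 2 := ![1, 0, 0]
/-- Relations (2a): `βγ = γα = 0`, `γ^p = (αβ)^q`. -/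
def rels2a (p q : ℕ) : Set (FreeAlgebra k (PGen (Fin 2) (Fin 3))) :=
  {fa2 k (Fin 3) 1 * fa2 k (Fin 3) 2, fa2 k (Fin 3) 2 * fa2 k (Fin 3) 0,
   fa2 k (Fin 3) 2 ^ p - (fa2 k (Fin 3) 0 * fa2 k (Fin 3) 1) ^ q}
/-- Relations (2b): `βα = γ² = 0`, `(γαβ)^m = (αβγ)^m`. -/
def rels2b (m : ℕ) : Set (FreeAlgebra k (PGen (Fin 2) (Fin 3))) :=
  {fa2 k (Fin 3) 1 * fa2 k (Fin 3) 0, fa2 k (Fin 3) 2 * fa2 k (Fin 3) 2,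
   (fa2 k (Fin 3) 2 * fa2 k (Fin 3) 0 * fa2 k (Fin 3) 1) ^ m -
     (fa2 k (Fin 3) 0 * fa2 k (Fin 3) 1 * fa2 k (Fin 3) 2) ^ m}

/-- Quiver (3): arrows `0 = α, 1 = α' : 1 → 2` and `2 = β, 3 = β' : 2 → 1`. -/
def src3 : Fin 4 → Fin 2 := ![0, 0, 1, 1]
def tgt3 : Fin 4 → Fin 2 := ![1, 1, 0, 0]
/-- Relations (3a): `αβ' = β'α = α'β = βα' = 0`, `(αβ)^p = (α'β')^q`, `(βα)^p = (β'α')^q`. -/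
def rels3a (p q : ℕ) : Set (FreeAlgebra k (PGen (Fin 2) (Fin 4))) :=
  {fa2 k (Fin 4) 0 * fa2 k (Fin 4) 3, fa2 k (Fin 4) 3 * fa2 k (Fin 4) 0,
   fa2 k (Fin 4) 1 * fa2 k (Fin 4) 2, fa2 k (Fin 4) 2 * fa2 k (Fin 4) 1,
   (fa2 k (Fin 4) 0 * fa2 k (Fin 4) 2) ^ p - (fa2 k (Fin 4) 1 * fa2 k (Fin 4) 3) ^ q,
   (fa2 k (Fin 4) 2 * fa2 k (Fin 4) 0) ^ p - (fa2 k (Fin 4) 3 * fa2 k (Fin 4) 1) ^ q}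
/-- Relations (3b): `αβ' = βα = α'β = β'α' = 0`, `(αβα'β')^m = (α'β'αβ)^m`,
`(βα'β'α)^m = (β'αβα')^m`. -/
def rels3b (m : ℕ) : Set (FreeAlgebra k (PGen (Fin 2) (Fin 4))) :=
  {fa2 k (Fin 4) 0 * fa2 k (Fin 4) 3, fa2 k (Fin 4) 2 * fa2 k (Fin 4) 0,
   fa2 k (Fin 4) 1 * fa2 k (Fin 4) 2, fa2 k (Fin 4) 3 * fa2 k (Fin 4) 1,
   (fa2 k (Fin 4) 0 * fa2 k (Fin 4) 2 * fa2 k (Fin 4) 1 * fa2 k (Fin 4) 3) ^ m -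
     (fa2 k (Fin 4) 1 * fa2 k (Fin 4) 3 * fa2 k (Fin 4) 0 * fa2 k (Fin 4) 2) ^ m,
   (fa2 k (Fin 4) 2 * fa2 k (Fin 4) 1 * fa2 k (Fin 4) 3 * fa2 k (Fin 4) 0) ^ m -
     (fa2 k (Fin 4) 3 * fa2 k (Fin 4) 0 * fa2 k (Fin 4) 2 * fa2 k (Fin 4) 1) ^ m}

/-- Quiver (4): arrows `0 = α : 1 → 2`, `1 = β : 2 → 1`, a loop `2 = γ` at `1` and a loop
`3 = δ` at `2`. -/
def src4 : Fin 4 → Fin 2 := ![0, 1, 0, 1]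
def tgt4 : Fin 4 → Fin 2 := ![1, 0, 0, 1]
/-- Relations (4a): `βγ = γα = αδ = δβ = 0`, `(αβ)^p = γ^q`, `(βα)^p = δ^r`. -/
def rels4a (p q r : ℕ) : Set (FreeAlgebra k (PGen (Fin 2) (Fin 4))) :=
  {fa2 k (Fin 4) 1 * fa2 k (Fin 4) 2, fa2 k (Fin 4) 2 * fa2 k (Fin 4) 0,
   fa2 k (Fin 4) 0 * fa2 k (Fin 4) 3, fa2 k (Fin 4) 3 * fa2 k (Fin 4) 1,
   (fa2 k (Fin 4) 0 * fa2 k (Fin 4) 1) ^ p - fa2 k (Fin 4) 2 ^ q,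
   (fa2 k (Fin 4) 1 * fa2 k (Fin 4) 0) ^ p - fa2 k (Fin 4) 3 ^ r}
/-- Relations (4b): `βα = γ² = αδ = δβ = 0`, `(γαβ)^p = (αβγ)^p`, `(βγα)^p = δ^q`. -/
def rels4b (p q : ℕ) : Set (FreeAlgebra k (PGen (Fin 2) (Fin 4))) :=
  {fa2 k (Fin 4) 1 * fa2 k (Fin 4) 0, fa2 k (Fin 4) 2 * fa2 k (Fin 4) 2,
   fa2 k (Fin 4) 0 * fa2 k (Fin 4) 3, fa2 k (Fin 4) 3 * fa2 k (Fin 4) 1,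
   (fa2 k (Fin 4) 2 * fa2 k (Fin 4) 0 * fa2 k (Fin 4) 1) ^ p -
     (fa2 k (Fin 4) 0 * fa2 k (Fin 4) 1 * fa2 k (Fin 4) 2) ^ p,
   (fa2 k (Fin 4) 1 * fa2 k (Fin 4) 2 * fa2 k (Fin 4) 0) ^ p - fa2 k (Fin 4) 3 ^ q}
/-- Relations (4c): `αβ = βα = γ² = δ² = 0`, `(βγαδ)^m = (δβγα)^m`, `(γαδβ)^m = (αδβγ)^m`. -/
def rels4c (m : ℕ) : Set (FreeAlgebra k (PGen (Fin 2) (Fin 4))) :=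
  {fa2 k (Fin 4) 0 * fa2 k (Fin 4) 1, fa2 k (Fin 4) 1 * fa2 k (Fin 4) 0,
   fa2 k (Fin 4) 2 * fa2 k (Fin 4) 2, fa2 k (Fin 4) 3 * fa2 k (Fin 4) 3,
   (fa2 k (Fin 4) 1 * fa2 k (Fin 4) 2 * fa2 k (Fin 4) 0 * fa2 k (Fin 4) 3) ^ m -
     (fa2 k (Fin 4) 3 * fa2 k (Fin 4) 1 * fa2 k (Fin 4) 2 * fa2 k (Fin 4) 0) ^ m,
   (fa2 k (Fin 4) 2 * fa2 k (Fin 4) 0 * fa2 k (Fin 4) 3 * fa2 k (Fin 4) 1) ^ m -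
     (fa2 k (Fin 4) 0 * fa2 k (Fin 4) 3 * fa2 k (Fin 4) 1 * fa2 k (Fin 4) 2) ^ m}

end TwoVertex

/-- A `k`-algebra `A` is a symmetric algebra if it has a trace form. -/
def IsSymmetricAlgebra' (k A : Type) [CommRing k] [Ring A] [Algebra k A] : Prop :=
  ∃ Tr : A →ₗ[k] k, (∀ a b : A, Tr (a * b) = Tr (b * a)) ∧
    ∀ a : A, a ≠ 0 → ∃ b : A, Tr (a * b) ≠ 0

/-!
Let `Tr` be a symmetrizing form. The right socle of `A` at a vertex `v` is a line on which `Tr` is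
injective, and for a connected quiver with more than one vertex no arrow lies in the socle. Hence
each arrow `a` has a unique continuation `next a` with `a * next a ≠ 0`, and `next` is a permutation
of the arrows. Following `next` from `a` as long as the product is nonzero ends in the socle, so the
trace of this maximal walk is nonzero; by `Tr (y * z) = Tr (z * y)` the walk is closed, and its
rotations have the same length and trace. Rescaling all arrows of an orbit by a suitable root makes
these traces equal to one, so that maximal walks from the same vertex agree in `A`. A triangularity
argument then shows that the resulting relations generate the kernel of `kQ → A`: the algebra is
determined by `next` and the lengths of the maximal walks.

Since `next` maps the arrows ending at `v` to those starting at `v`, in- and out-degrees agree. For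
two vertices this leaves four quivers, and each has at most four permutations `next`.
-/

section PathAlgebra

variable {k V E : Type} [CommRing k] [Fintype V] [DecidableEq V] {s t : E → V}

theorem pV_mul_pV (v w : V) :
    pV k s t v * pV k s t w = if v = w then pV k s t v else 0 := by
  have h := RingQuot.mkAlgHom_rel k (PathRel.vv (k := k) (s := s) (t := t) v w)
  rw [map_mul, apply_ite (RingQuot.mkAlgHom k _), map_zero] at h
  exact h

theorem sum_pV : ∑ v, pV k s t v = 1 := by
  have h := RingQuot.mkAlgHom_rel k (PathRel.sum_v (k := k) (s := s) (t := t))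
  rwa [map_sum, map_one] at h

theorem pV_src_mul_pA (a : E) : pV k s t (s a) * pA k s t a = pA k s t a := by
  have h := RingQuot.mkAlgHom_rel k (PathRel.src (k := k) (s := s) (t := t) a)
  rwa [map_mul] at h

theorem pA_mul_pV_tgt (a : E) : pA k s t a * pV k s t (t a) = pA k s t a := by
  have h := RingQuot.mkAlgHom_rel k (PathRel.tgt (k := k) (s := s) (t := t) a)
  rwa [map_mul] at h

theorem pV_mul_pA (v : V) (a : E) :
    pV k s t v * pA k s t a = if v = s a then pA k s t a else 0 := by
  rw [← pV_src_mul_pA a, ← mul_assoc, pV_mul_pV, ite_mul, zero_mul]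
  split_ifs with h
  · rw [h]
  · rfl

theorem pA_mul_pV (a : E) (v : V) :
    pA k s t a * pV k s t v = if t a = v then pA k s t a else 0 := by
  rw [← pA_mul_pV_tgt a, mul_assoc, pV_mul_pV, mul_ite, mul_zero]

theorem pA_mul_pA_of_ne {a b : E} (h : t a ≠ s b) : pA k s t a * pA k s t b = 0 := by
  rw [← pA_mul_pV_tgt a, mul_assoc, pV_mul_pA, if_neg h, mul_zero]

theorem pathAlg_algHom_ext {A : Type} [Ring A] [Algebra k A] {f g : PathAlg k V E s t →ₐ[k] A}
    (hV : ∀ v, f (pV k s t v) = g (pV k s t v)) (hA : ∀ a, f (pA k s t a) = g (pA k s t a)) :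
    f = g := by
  refine RingQuot.ringQuot_ext' _ _ _ (FreeAlgebra.hom_ext (funext fun
    | .vert v => hV v
    | .arr a => hA a))

theorem pathAlg_induction {p : PathAlg k V E s t → Prop} (algebraMap : ∀ r, p (algebraMap k _ r))
    (vert : ∀ v, p (pV k s t v)) (arr : ∀ a, p (pA k s t a))
    (add : ∀ y z, p y → p z → p (y + z)) (mul : ∀ y z, p y → p z → p (y * z))
    (y : PathAlg k V E s t) : p y := by
  obtain ⟨y, rfl⟩ := RingQuot.mkAlgHom_surjective k _ y
  induction y using FreeAlgebra.induction with
  | grade0 r => rw [AlgHom.commutes]; exact algebraMap r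
  | grade1 g =>
    cases g with
    | vert v => exact vert v
    | arr a => exact arr a
  | mul y z hy hz => rw [map_mul]; exact mul _ _ hy hz
  | add y z hy hz => rw [map_add]; exact add _ _ hy hz

theorem span_eq_top_of_mul_mem {T : Set (PathAlg k V E s t)}
    (pV_mem : ∀ v, pV k s t v ∈ Submodule.span k T)
    (mul_pV_mem : ∀ z ∈ T, ∀ v, z * pV k s t v ∈ Submodule.span k T)
    (mul_pA_mem : ∀ z ∈ T, ∀ a, z * pA k s t a ∈ Submodule.span k T) :
    Submodule.span k T = ⊤ := by
  set S := Submodule.span k T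
  have mul_mem_of_generators {g : PathAlg k V E s t} (hg : ∀ z ∈ T, z * g ∈ S) :
      ∀ z ∈ S, z * g ∈ S :=
    fun z hz => (Submodule.span_le (p := S.comap (LinearMap.mulRight k g))).2 hg hz
  have mul_mem (y : PathAlg k V E s t) : ∀ z ∈ S, z * y ∈ S := by
    induction y using pathAlg_induction with
    | algebraMap r =>
      intro z hz
      rw [← Algebra.commutes, ← Algebra.smul_def]
      exact S.smul_mem r hz
    | vert v => exact mul_mem_of_generators fun z hz => mul_pV_mem z hz v
    | arr a => exact mul_mem_of_generators fun z hz => mul_pA_mem z hz a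
    | add y y' hy hy' =>
      intro z hz
      rw [mul_add]
      exact S.add_mem (hy z hz) (hy' z hz)
    | mul y y' hy hy' =>
      intro z hz
      rw [← mul_assoc]
      exact hy' _ (hy z hz)
  have one_mem : (1 : PathAlg k V E s t) ∈ S := by
    rw [← sum_pV]
    exact S.sum_mem fun v _ => pV_mem v
  exact eq_top_iff.2 fun y _ => one_mul y ▸ mul_mem y 1 one_mem

theorem linearMap_eq_zero_of_pV_of_pA_mul {M : Type*} [AddCommGroup M] [Module k M]
    {f : PathAlg k V E s t →ₗ[k] M} (hV : ∀ v, f (pV k s t v) = 0)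
    (hA : ∀ a y, f (pA k s t a * y) = 0) : f = 0 := by
  set T := Set.range (pV k s t) ∪
    Set.range fun i : E × PathAlg k V E s t => pA k s t i.1 * i.2
  have pV_mem (v : V) : pV k s t v ∈ Submodule.span k T :=
    Submodule.subset_span (Or.inl ⟨v, rfl⟩)
  have pA_mul_mem (a : E) (y : PathAlg k V E s t) : pA k s t a * y ∈ Submodule.span k T :=
    Submodule.subset_span (Or.inr ⟨(a, y), rfl⟩)
  have span_eq_top : Submodule.span k T = ⊤ := by
    refine span_eq_top_of_mul_mem pV_mem ?_ ?_
    · rintro _ (⟨w, rfl⟩ | ⟨⟨a, y⟩, rfl⟩) v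
      · rw [pV_mul_pV]
        split_ifs
        exacts [pV_mem w, zero_mem _]
      · rw [mul_assoc]
        exact pA_mul_mem _ _
    · rintro _ (⟨w, rfl⟩ | ⟨⟨a, y⟩, rfl⟩) b
      · rw [pV_mul_pA]
        split_ifs
        exacts [mul_one (pA k s t b) ▸ pA_mul_mem b 1, zero_mem _]
      · rw [mul_assoc]
        exact pA_mul_mem _ _
  refine LinearMap.ext_on span_eq_top ?_
  rintro _ (⟨v, rfl⟩ | ⟨⟨a, y⟩, rfl⟩)
  exacts [hV v, hA a y]

/-- Elements `e v` and `x a` of a ring satisfying the defining relations of the path algebra of the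
quiver `(V, E, s, t)`; such families are the same as algebra maps out of the path algebra. -/
structure PathFamily {A : Type} [Ring A] (s t : E → V) (e : V → A) (x : E → A) : Prop where
  vert_mul_vert : ∀ v w, e v * e w = if v = w then e v else 0
  sum_vert : ∑ v, e v = 1
  src_mul : ∀ a, e (s a) * x a = x a
  mul_tgt : ∀ a, x a * e (t a) = x a

/-- The algebra map out of the path algebra given by the images `e` of the vertices and `x` of the
arrows. -/
def pathLift (k : Type) [CommRing k] {A : Type} [Ring A] [Algebra k A] {e : V → A} {x : E → A}
    (h : PathFamily s t e x) : PathAlg k V E s t →ₐ[k] A :=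
  RingQuot.liftAlgHom k ⟨FreeAlgebra.lift k fun | .vert v => e v | .arr a => x a, by
    rintro _ _ (⟨v, w⟩ | _ | a | a)
    · simp only [map_mul, apply_ite (FreeAlgebra.lift k _), map_zero, FreeAlgebra.lift_ι_apply,
        h.vert_mul_vert]
    · simp only [map_sum, map_one, FreeAlgebra.lift_ι_apply, h.sum_vert]
    · simp only [map_mul, FreeAlgebra.lift_ι_apply, h.src_mul]
    · simp only [map_mul, FreeAlgebra.lift_ι_apply, h.mul_tgt]⟩

variable {A : Type} [Ring A] [Algebra k A] {e : V → A} {x : E → A}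

@[simp]
theorem pathLift_pV (h : PathFamily s t e x) (v : V) : pathLift k h (pV k s t v) = e v := by
  simp [pathLift, pV]

@[simp]
theorem pathLift_pA (h : PathFamily s t e x) (a : E) : pathLift k h (pA k s t a) = x a := by
  simp [pathLift, pA]

end PathAlgebra

section ArrowIdeal

variable {k V E : Type} [CommRing k] [Fintype V] [DecidableEq V] {s t : E → V}

theorem pA_mem_arrowIdeal (a : E) : pA k s t a ∈ arrowIdeal k s t := by
  rw [← one_mul (pA k s t a), ← mul_one (1 * _)]
  exact Submodule.mul_mem_mul (Submodule.mul_mem_mul trivial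
    (Submodule.subset_span ⟨a, rfl⟩)) trivial

theorem isTwoSidedSub_arrowIdeal : IsTwoSidedSub (arrowIdeal k s t) := by
  intro x hx a
  rw [arrowIdeal] at hx ⊢
  constructor
  · have hax : a * x ∈ ⊤ * (⊤ * Submodule.span k (Set.range (pA k s t)) * ⊤) :=
      Submodule.mul_mem_mul trivial hx
    rw [← mul_assoc, ← mul_assoc] at hax
    exact SetLike.le_def.1 (mul_le_mul_left (mul_le_mul_left le_top _) _) hax
  · have hxa : x * a ∈ ⊤ * Submodule.span k (Set.range (pA k s t)) * ⊤ * ⊤ :=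
      Submodule.mul_mem_mul hx trivial
    rw [mul_assoc _ ⊤ ⊤] at hxa
    exact SetLike.le_def.1 (mul_le_mul_right le_top _) hxa

theorem arrowIdeal_le {N : Submodule k (PathAlg k V E s t)} (hN : IsTwoSidedSub N)
    (h : ∀ a, pA k s t a ∈ N) : arrowIdeal k s t ≤ N := by
  have hspan : Submodule.span k (Set.range (pA k s t)) ≤ N :=
    Submodule.span_le.2 (Set.range_subset_iff.2 h)
  have hleft : ⊤ * Submodule.span k (Set.range (pA k s t)) ≤ N :=
    Submodule.mul_le.2 fun y _ x hx => (hN x (hspan hx) y).1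
  exact Submodule.mul_le.2 fun x hx y _ => (hN x (hleft hx) y).2

theorem map_eq_zero_of_mem_arrowIdeal {A : Type} [Ring A] [Algebra k A]
    {f : PathAlg k V E s t →ₐ[k] A} (hf : ∀ a, f (pA k s t a) = 0) {y : PathAlg k V E s t}
    (hy : y ∈ arrowIdeal k s t) : f y = 0 :=
  arrowIdeal_le (N := LinearMap.ker f.toLinearMap)
    (fun x (hx : f x = 0) a => ⟨show f (a * x) = 0 by rw [map_mul, hx, mul_zero],
      show f (x * a) = 0 by rw [map_mul, hx, zero_mul]⟩) hf hy

theorem map_mem_arrowIdeal_pow {V' E' : Type} [Fintype V'] [DecidableEq V'] {s' t' : E' → V'}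
    {f : PathAlg k V E s t →ₐ[k] PathAlg k V' E' s' t'}
    (hf : ∀ a, f (pA k s t a) ∈ arrowIdeal k s' t') (N : ℕ) {y : PathAlg k V E s t}
    (hy : y ∈ arrowIdeal k s t ^ N) : f y ∈ arrowIdeal k s' t' ^ N := by
  have hle : arrowIdeal k s t ≤ (arrowIdeal k s' t').comap f.toLinearMap :=
    arrowIdeal_le (fun x hx a => by
      simpa using isTwoSidedSub_arrowIdeal (f x) hx (f a)) hf
  have hpow : (arrowIdeal k s t ^ N).map f.toLinearMap ≤ arrowIdeal k s' t' ^ N := by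
    rw [Submodule.map_pow]
    exact pow_le_pow_left' (Submodule.map_le_iff_le_comap.2 hle) N
  exact hpow ⟨y, hy, rfl⟩

/-- An algebra map `kQ → A` that presents `A` as the quotient of `kQ` by an admissible ideal. -/
structure IsAdmissiblePresentation {A : Type} [Ring A] [Algebra k A]
    (π : PathAlg k V E s t →ₐ[k] A) : Prop where
  surjective : Function.Surjective π
  mem_sq_of_map_eq_zero : ∀ y, π y = 0 → y ∈ arrowIdeal k s t ^ 2
  exists_map_pow_eq_zero : ∃ N, ∀ y ∈ arrowIdeal k s t ^ N, π y = 0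

theorem pathQuotMap_eq_zero_iff {I : Submodule k (PathAlg k V E s t)} (hI : IsTwoSidedSub I)
    (y : PathAlg k V E s t) : pathQuotMap k s t I y = 0 ↔ y ∈ I := by
  let J : TwoSidedIdeal (PathAlg k V E s t) := TwoSidedIdeal.mk' (I : Set _) I.zero_mem
    I.add_mem I.neg_mem (fun {a b} hb => (hI b hb a).1) (fun {a b} ha => (hI a ha b).2)
  have rel_iff (a b : PathAlg k V E s t) : J.ringCon a b ↔ a - b ∈ I := by
    rw [TwoSidedIdeal.rel_iff]
    exact TwoSidedIdeal.mem_mk' ..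
  let f : PathQuot k s t I →+* J.ringCon.Quotient :=
    RingQuot.lift ⟨J.ringCon.mk', fun a b hab => (RingCon.eq _).2 ((rel_iff a b).2 hab)⟩
  have hf : f (pathQuotMap k s t I y) = J.ringCon.mk' y := by
    simp only [f, pathQuotMap, RingQuot.mkAlgHom]
    exact RingQuot.lift_mkRingHom_apply ..
  constructor
  · intro hy
    rw [hy, map_zero] at hf
    simpa using (rel_iff y 0).1 ((RingCon.eq _).1 hf.symm)
  · intro hy
    have h := RingQuot.mkAlgHom_rel k (s := fun a b : PathAlg k V E s t => a - b ∈ I)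
      (x := y) (y := 0) (by rwa [sub_zero])
    rwa [map_zero] at h

theorem isAdmissiblePresentation_pathQuotMap {I : Submodule k (PathAlg k V E s t)}
    (hI : IsAdmissible k s t I) :
    IsAdmissiblePresentation (A := PathQuot k s t I) (pathQuotMap k s t I) := by
  obtain ⟨two_sided, le_sq, N, pow_le⟩ := hI
  exact ⟨RingQuot.mkAlgHom_surjective k _,
    fun y hy => le_sq ((pathQuotMap_eq_zero_iff two_sided y).1 hy),
    N, fun y hy => (pathQuotMap_eq_zero_iff two_sided y).2 (pow_le hy)⟩

end ArrowIdeal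

section ArrowDetector

variable {k V E : Type} [CommRing k] [Fintype V] [DecidableEq V] {s t : E → V}

theorem pathFamily_single [DecidableEq E] (s t : E → V) (a : E) :
    PathFamily s t (fun v => (Matrix.single v v 1 : Matrix V V (DualNumber k)))
      (fun b => if b = a then Matrix.single (s b) (t b) DualNumber.eps else 0) where
  vert_mul_vert v w := by
    split_ifs with h
    · simp [h]
    · simp [h]
  sum_vert := by simp [Matrix.sum_single_eq_diagonal]
  src_mul b := by split_ifs <;> simp
  mul_tgt b := by split_ifs <;> simp

theorem exists_algHom_detecting_arrow [Nontrivial k] (a : E) :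
    ∃ χ : PathAlg k V E s t →ₐ[k] Matrix V V (DualNumber k),
      χ (pA k s t a) ≠ 0 ∧ (∀ b, b ≠ a → χ (pA k s t b) = 0) ∧
      ∀ y ∈ arrowIdeal k s t ^ 2, χ y = 0 := by
  classical
  let χ := pathLift k (pathFamily_single (k := k) s t a)
  let fst := (TrivSqZeroExt.fstHom k k k).mapMatrix (m := V)
  have fst_pA (b : E) : (fst.comp χ) (pA k s t b) = 0 := by
    ext i j
    simp only [AlgHom.comp_apply, χ, fst, pathLift_pA]
    split_ifs
    · simp [Matrix.single_apply, apply_ite TrivSqZeroExt.fst]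
    · simp
  have mul_eq_zero {M M' : Matrix V V (DualNumber k)} (hM : fst M = 0) (hM' : fst M' = 0) :
      M * M' = 0 := by
    have fst_apply {M} (hM : fst M = 0) (i j : V) : (M i j).fst = 0 := congr_fun₂ hM i j
    ext i j <;> simp [Matrix.mul_apply, TrivSqZeroExt.fst_sum, TrivSqZeroExt.snd_sum,
      fst_apply hM, fst_apply hM']
  refine ⟨χ, ?_, fun b hb => by simp [χ, hb], fun y hy => ?_⟩
  · intro h
    simpa [χ] using congrArg (fun M => (M (s a) (t a)).snd) h
  · rw [pow_two] at hy
    induction hy using Submodule.mul_induction_on' with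
    | mem_mul_mem y hy z hz =>
      rw [map_mul]
      exact mul_eq_zero (map_eq_zero_of_mem_arrowIdeal fst_pA hy)
        (map_eq_zero_of_mem_arrowIdeal fst_pA hz)
    | add y _ z _ hy hz => rw [map_add, hy, hz, add_zero]

namespace IsAdmissiblePresentation

variable [Nontrivial k] {A : Type} [Ring A] [Algebra k A] {π : PathAlg k V E s t →ₐ[k] A}

theorem map_pA_ne_map_pA_mul (hπ : IsAdmissiblePresentation π) {a b : E} (hab : b ≠ a) (y : A) :
    π (pA k s t a) ≠ π (pA k s t b) * y := by
  obtain ⟨χ, χ_a, χ_ne, χ_sq⟩ := exists_algHom_detecting_arrow (k := k) (s := s) (t := t) a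
  obtain ⟨y, rfl⟩ := hπ.surjective y
  intro h
  have hχ : χ (pA k s t a - pA k s t b * y) = 0 :=
    χ_sq _ (hπ.mem_sq_of_map_eq_zero _ (by rw [map_sub, map_mul, h, sub_self]))
  rw [map_sub, map_mul, χ_ne b hab, zero_mul, sub_zero] at hχ
  exact χ_a hχ

theorem map_pA_ne_zero (hπ : IsAdmissiblePresentation π) (a : E) : π (pA k s t a) ≠ 0 := by
  obtain ⟨χ, χ_a, -, χ_sq⟩ := exists_algHom_detecting_arrow (k := k) (s := s) (t := t) a
  exact fun h => χ_a (χ_sq _ (hπ.mem_sq_of_map_eq_zero _ h))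

end IsAdmissiblePresentation

end ArrowDetector

section QuiverIso

variable {k V V' E E' : Type} {s t : E → V} {s' t' : E' → V'}

/-- An isomorphism of quivers `(V, E, s, t) ≅ (V', E', s', t')`. -/
structure QuiverIso (s t : E → V) (s' t' : E' → V') where
  vertex : V ≃ V'
  arrow : E ≃ E'
  src_arrow : ∀ a, s' (arrow a) = vertex (s a)
  tgt_arrow : ∀ a, t' (arrow a) = vertex (t a)

/-- The number of arrows from `v` to `w`. -/
def arrowCount [Fintype E] [DecidableEq V] (s t : E → V) (v w : V) : ℕ :=
  Finset.card {a | s a = v ∧ t a = w}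

namespace QuiverIso

/-- The identity of a quiver. -/
@[simps]
def refl (s t : E → V) : QuiverIso s t s t where
  vertex := .refl V
  arrow := .refl E
  src_arrow _ := rfl
  tgt_arrow _ := rfl

/-- The inverse of an isomorphism of quivers. -/
@[simps]
def symm (f : QuiverIso s t s' t') : QuiverIso s' t' s t where
  vertex := f.vertex.symm
  arrow := f.arrow.symm
  src_arrow b := by rw [Equiv.eq_symm_apply, ← f.src_arrow, f.arrow.apply_symm_apply]
  tgt_arrow b := by rw [Equiv.eq_symm_apply, ← f.tgt_arrow, f.arrow.apply_symm_apply]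

theorem nonempty_of_arrowCount_eq [Fintype E] [Fintype E'] [DecidableEq V] [DecidableEq V']
    (vertex : V ≃ V')
    (h : ∀ v w, arrowCount s t v w = arrowCount s' t' (vertex v) (vertex w)) :
    Nonempty (QuiverIso s t s' t') := by
  let ends (a : E) : V' × V' := (vertex (s a), vertex (t a))
  let ends' (b : E') : V' × V' := (s' b, t' b)
  have fiberEquiv (p : V' × V') : Nonempty ({a // ends a = p} ≃ {b // ends' b = p}) := by
    refine Fintype.card_eq.1 ?_
    simpa only [arrowCount, Fintype.card_subtype, ends, ends', Prod.ext_iff, ← Equiv.eq_symm_apply,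
      Equiv.apply_symm_apply] using h (vertex.symm p.1) (vertex.symm p.2)
  have ends_eq (a : E) : ends' (Equiv.ofFiberEquiv (fun p => (fiberEquiv p).some) a) = ends a :=
    Equiv.ofFiberEquiv_map _ a
  exact ⟨⟨vertex, _, fun a => congrArg Prod.fst (ends_eq a),
    fun a => congrArg Prod.snd (ends_eq a)⟩⟩

variable [CommRing k] [Fintype V] [DecidableEq V] [Fintype V'] [DecidableEq V']

theorem pathFamily (f : QuiverIso s t s' t') (c : E → k) :
    PathFamily s t (fun v => pV k s' t' (f.vertex v)) (fun a => c a • pA k s' t' (f.arrow a)) where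
  vert_mul_vert v w := by simp only [pV_mul_pV, EmbeddingLike.apply_eq_iff_eq]
  sum_vert := by rw [f.vertex.sum_comp (pV k s' t'), sum_pV]
  src_mul a := by rw [mul_smul_comm, ← f.src_arrow, pV_src_mul_pA]
  mul_tgt a := by rw [smul_mul_assoc, ← f.tgt_arrow, pA_mul_pV_tgt]

/-- The map of path algebras induced by an isomorphism of quivers, with each arrow `a` rescaled by
`c a`. -/
def pathAlgHom (f : QuiverIso s t s' t') (c : E → k) :
    PathAlg k V E s t →ₐ[k] PathAlg k V' E' s' t' :=
  pathLift k (f.pathFamily c)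

@[simp]
theorem pathAlgHom_pV (f : QuiverIso s t s' t') (c : E → k) (v : V) :
    f.pathAlgHom c (pV k s t v) = pV k s' t' (f.vertex v) :=
  pathLift_pV _ v

@[simp]
theorem pathAlgHom_pA (f : QuiverIso s t s' t') (c : E → k) (a : E) :
    f.pathAlgHom c (pA k s t a) = c a • pA k s' t' (f.arrow a) :=
  pathLift_pA _ a

theorem pathAlgHom_pA_mem (f : QuiverIso s t s' t') (c : E → k) (a : E) :
    f.pathAlgHom c (pA k s t a) ∈ arrowIdeal k s' t' :=
  f.pathAlgHom_pA c a ▸ Submodule.smul_mem _ _ (pA_mem_arrowIdeal _)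

theorem pathAlgHom_symm_pathAlgHom (f : QuiverIso s t s' t') (c : E → kˣ)
    (y : PathAlg k V E s t) :
    f.symm.pathAlgHom (fun b => ↑(c (f.arrow.symm b))⁻¹)
      (f.pathAlgHom (fun a => ↑(c a)) y) = y := by
  refine DFunLike.congr_fun (pathAlg_algHom_ext (f := (AlgHom.comp _ _)) (g := AlgHom.id k _)
    (fun v => ?_) fun a => ?_) y
  · simp
  · simp [smul_smul]

end QuiverIso

namespace IsAdmissiblePresentation

variable [CommRing k] [Fintype V] [DecidableEq V] [Fintype V'] [DecidableEq V']
  {A : Type} [Ring A] [Algebra k A] {π : PathAlg k V' E' s' t' →ₐ[k] A}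

theorem comp_pathAlgHom (hπ : IsAdmissiblePresentation π) (f : QuiverIso s t s' t') (c : E → kˣ) :
    IsAdmissiblePresentation (π.comp (f.pathAlgHom fun a => ↑(c a))) := by
  obtain ⟨N, hN⟩ := hπ.exists_map_pow_eq_zero
  refine ⟨hπ.surjective.comp fun y => ?_, fun y hy => ?_, N, fun y hy => ?_⟩
  · have h := f.symm.pathAlgHom_symm_pathAlgHom (fun b => (c (f.arrow.symm b))⁻¹) y
    simp only [QuiverIso.symm_arrow, Equiv.symm_symm, Equiv.symm_apply_apply, inv_inv] at h
    exact ⟨_, h⟩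
  · rw [← f.pathAlgHom_symm_pathAlgHom c y]
    exact map_mem_arrowIdeal_pow (QuiverIso.pathAlgHom_pA_mem _ _) 2 (hπ.mem_sq_of_map_eq_zero _ hy)
  · exact hN _ (map_mem_arrowIdeal_pow (QuiverIso.pathAlgHom_pA_mem _ _) N hy)

end IsAdmissiblePresentation

end QuiverIso

section Walk

variable {k V E : Type} [CommRing k] [Fintype V] [DecidableEq V] {s t : E → V} {σ : E → E}

/-- The product in the path algebra of the `n` arrows `a, σ a, …, σ^[n - 1] a`; for `n = 0` this is
the idempotent at the source of `a`. -/
def walk (k : Type) [CommRing k] (s t : E → V) (σ : E → E) (a : E) : ℕ → PathAlg k V E s t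
  | 0 => pV k s t (s a)
  | n + 1 => walk k s t σ a n * pA k s t (σ^[n] a)

theorem walk_zero (a : E) : walk k s t σ a 0 = pV k s t (s a) :=
  rfl

theorem walk_succ (a : E) (n : ℕ) :
    walk k s t σ a (n + 1) = walk k s t σ a n * pA k s t (σ^[n] a) :=
  rfl

theorem walk_one (a : E) : walk k s t σ a 1 = pA k s t a :=
  pV_src_mul_pA a

theorem pV_mul_walk (v : V) (a : E) (n : ℕ) :
    pV k s t v * walk k s t σ a n = if v = s a then walk k s t σ a n else 0 := by
  induction n with
  | zero =>
    rw [walk_zero, pV_mul_pV]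
    split_ifs with h
    · rw [h]
    · rfl
  | succ n ih => rw [walk_succ, ← mul_assoc, ih, ite_mul, zero_mul]

theorem exists_mem_arrowIdeal_pow_walk_eq (a : E) (n : ℕ) :
    ∃ y ∈ arrowIdeal k s t ^ n, walk k s t σ a n = pV k s t (s a) * y := by
  induction n with
  | zero => exact ⟨1, pow_zero (arrowIdeal k s t) ▸ Submodule.one_le.1 le_rfl, (mul_one _).symm⟩
  | succ n ih =>
    obtain ⟨y, hy, hwalk⟩ := ih
    exact ⟨y * pA k s t (σ^[n] a),
      pow_succ (arrowIdeal k s t) n ▸ Submodule.mul_mem_mul hy (pA_mem_arrowIdeal _),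
      by rw [walk_succ, hwalk, mul_assoc]⟩

theorem QuiverIso.pathAlgHom_walk {V' E' : Type} [Fintype V'] [DecidableEq V'] {s' t' : E' → V'}
    {σ' : E' → E'} (f : QuiverIso s t s' t') {c : E → k}
    (hf : Function.Semiconj f.arrow σ σ') (hc : ∀ a, c (σ a) = c a) (a : E) (n : ℕ) :
    f.pathAlgHom c (walk k s t σ a n) = c a ^ n • walk k s' t' σ' (f.arrow a) n := by
  have hc_iterate (n : ℕ) : c (σ^[n] a) = c a :=
    Function.Semiconj.iterate_right (f := c) (ga := σ) (gb := id) hc n a |>.trans (by simp)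
  induction n with
  | zero => simp only [walk_zero, pathAlgHom_pV, pow_zero, one_smul, f.src_arrow]
  | succ n ih =>
    rw [walk_succ, walk_succ, map_mul, ih, pathAlgHom_pA, hc_iterate, (hf.iterate_right n).eq,
      smul_mul_smul_comm, pow_succ]

theorem walk_mul_pV (hσ : ∀ a, t a = s (σ a)) (a : E) (n : ℕ) (v : V) :
    walk k s t σ a n * pV k s t v = if s (σ^[n] a) = v then walk k s t σ a n else 0 := by
  cases n with
  | zero => exact pV_mul_pV _ _
  | succ n =>
    rw [walk_succ, mul_assoc, pA_mul_pV, mul_ite, mul_zero, Function.iterate_succ_apply', hσ]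

theorem walk_add (hσ : ∀ a, t a = s (σ a)) (a : E) (m n : ℕ) :
    walk k s t σ a (m + n) = walk k s t σ a m * walk k s t σ (σ^[m] a) n := by
  induction n with
  | zero => rw [walk_zero, walk_mul_pV hσ, if_pos rfl, add_zero]
  | succ n ih =>
    rw [← add_assoc, walk_succ, walk_succ, ih, mul_assoc, ← Function.iterate_add_apply, add_comm n]

theorem walk_succ' (hσ : ∀ a, t a = s (σ a)) (a : E) (n : ℕ) :
    walk k s t σ a (n + 1) = pA k s t a * walk k s t σ (σ a) n := by
  rw [add_comm, walk_add hσ, walk_one, Function.iterate_one]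

theorem walk_mul_eq_pow (hσ : ∀ a, t a = s (σ a)) {a : E} {n : ℕ} (ha : σ^[n] a = a) {p : ℕ}
    (hp : p ≠ 0) :
    walk k s t σ a (n * p) = walk k s t σ a n ^ p := by
  induction p, Nat.one_le_iff_ne_zero.2 hp using Nat.le_induction with
  | base => rw [mul_one, pow_one]
  | succ p hp ih =>
    rw [mul_add_one, add_comm, walk_add hσ, ha, ih (by lia), pow_succ']

variable {A : Type} [Ring A] [Algebra k A] {ρ : PathAlg k V E s t →ₐ[k] A}

theorem map_walk_mul_pA_eq_zero (hρ : ∀ a b, b ≠ σ a → ρ (pA k s t a * pA k s t b) = 0)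
    (a : E) {n : ℕ} (hn : n ≠ 0) {b : E} (hb : b ≠ σ^[n] a) :
    ρ (walk k s t σ a n * pA k s t b) = 0 := by
  obtain ⟨n, rfl⟩ := Nat.exists_eq_succ_of_ne_zero hn
  rw [Function.iterate_succ_apply'] at hb
  rw [walk_succ, mul_assoc, map_mul, hρ _ _ hb, mul_zero]

end Walk

section BrauerData

variable {V E : Type} {s t : E → V}

/-- The combinatorial shape of a symmetric special biserial algebra: each arrow `a` is followed by
`next a`, and the walk along `next` from `a` is nonzero up to the length `len a`, a multiple of the
period of `a`, at which it spans the socle at the source of `a`. In terms of Brauer graphs, the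
orbits of `next` are the cyclic orders around the vertices and `len` is the valency times the
multiplicity. -/
structure BrauerData (s t : E → V) where
  next : E → E
  len : E → ℕ
  next_injective : Function.Injective next
  tgt_eq : ∀ a, t a = s (next a)
  two_le_len : ∀ a, 2 ≤ len a
  len_next : ∀ a, len (next a) = len a
  iterate_len : ∀ a, next^[len a] a = a

namespace BrauerData

theorem len_iterate_next (B : BrauerData s t) (a : E) (n : ℕ) : B.len (B.next^[n] a) = B.len a := by
  induction n with
  | zero => rfl
  | succ n ih => rw [Function.iterate_succ_apply', B.len_next, ih]

variable {k : Type} [CommRing k] [Fintype V] [DecidableEq V] (B : BrauerData s t)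

/-- The closed walk of length `len a` starting with the arrow `a`. -/
def cycle (k : Type) [CommRing k] (a : E) : PathAlg k V E s t :=
  walk k s t B.next a (B.len a)

theorem cycle_def (a : E) : B.cycle k a = walk k s t B.next a (B.len a) :=
  rfl

theorem cycle_mul_pV (a : E) (v : V) :
    B.cycle k a * pV k s t v = if s a = v then B.cycle k a else 0 := by
  rw [cycle, walk_mul_pV B.tgt_eq, B.iterate_len]

theorem cycle_eq_pow {n p : ℕ} {a : E} (ha : B.next^[n] a = a) (hp : p ≠ 0)
    (hlen : B.len a = n * p) : B.cycle k a = walk k s t B.next a n ^ p := by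
  rw [cycle, hlen, walk_mul_eq_pow B.tgt_eq ha hp]

variable {C D : Type} [Ring C] [Algebra k C] [Ring D] [Algebra k D]

/-- The defining relations of the algebra of shape `B`, for an algebra map out of the path
algebra. -/
structure Relations (ρ : PathAlg k V E s t →ₐ[k] C) : Prop where
  mul_eq_zero : ∀ a b, b ≠ B.next a → ρ (pA k s t a * pA k s t b) = 0
  cycle_eq_cycle : ∀ a b, s a = s b → ρ (B.cycle k a) = ρ (B.cycle k b)
  cycle_mul_eq_zero : ∀ a b, ρ (B.cycle k a * pA k s t b) = 0

variable {B}

theorem Relations.prod {ρ : PathAlg k V E s t →ₐ[k] C} {ρ' : PathAlg k V E s t →ₐ[k] D}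
    (hρ : B.Relations ρ) (hρ' : B.Relations ρ') : B.Relations (ρ.prod ρ') where
  mul_eq_zero a b hb := Prod.ext (hρ.mul_eq_zero a b hb) (hρ'.mul_eq_zero a b hb)
  cycle_eq_cycle a b hab := Prod.ext (hρ.cycle_eq_cycle a b hab) (hρ'.cycle_eq_cycle a b hab)
  cycle_mul_eq_zero a b := Prod.ext (hρ.cycle_mul_eq_zero a b) (hρ'.cycle_mul_eq_zero a b)

theorem Relations.map_walk_eq_zero {ρ : PathAlg k V E s t →ₐ[k] C} (hρ : B.Relations ρ) {a : E}
    {n : ℕ} (hn : B.len a < n) : ρ (walk k s t B.next a n) = 0 := by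
  obtain ⟨m, rfl⟩ := Nat.exists_eq_add_of_lt hn
  rw [add_assoc, walk_add B.tgt_eq, walk_succ' B.tgt_eq, ← mul_assoc, map_mul, ← cycle_def,
    hρ.cycle_mul_eq_zero, zero_mul]

theorem Relations.map_walk_mul_walk_eq_zero {ρ : PathAlg k V E s t →ₐ[k] C} (hρ : B.Relations ρ)
    {a b : E} {m n : ℕ} (hm : m ≠ 0) (hn : n ≠ 0) (h : b = B.next^[m] a → B.len a < m + n) :
    ρ (walk k s t B.next a m * walk k s t B.next b n) = 0 := by
  by_cases hb : b = B.next^[m] a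
  · rw [hb, ← walk_add B.tgt_eq, hρ.map_walk_eq_zero (h hb)]
  · obtain ⟨n, rfl⟩ := Nat.exists_eq_succ_of_ne_zero hn
    rw [walk_succ' B.tgt_eq, ← mul_assoc, map_mul,
      map_walk_mul_pA_eq_zero hρ.mul_eq_zero a hm hb, zero_mul]

variable (B) in
/-- An admissible presentation that satisfies the relations of shape `B` and does not kill the
cycles, so that its kernel is generated by these relations. -/
structure IsPresentation (π : PathAlg k V E s t →ₐ[k] C) : Prop
    extends IsAdmissiblePresentation π, B.Relations π where
  cycle_ne_zero : ∀ a, π (B.cycle k a) ≠ 0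

/-- The transport of `B` along an isomorphism of quivers. -/
@[simps]
def comap {V' E' : Type} {s' t' : E' → V'} (B : BrauerData s' t') (f : QuiverIso s t s' t') :
    BrauerData s t where
  next a := f.arrow.symm (B.next (f.arrow a))
  len a := B.len (f.arrow a)
  next_injective := f.arrow.symm.injective.comp (B.next_injective.comp f.arrow.injective)
  tgt_eq a := by
    rw [← f.vertex.apply_eq_iff_eq, ← f.src_arrow, ← f.tgt_arrow, f.arrow.apply_symm_apply,
      B.tgt_eq]
  two_le_len a := B.two_le_len _
  len_next a := by rw [f.arrow.apply_symm_apply, B.len_next]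
  iterate_len a := by
    have h : Function.Semiconj f.arrow (fun a => f.arrow.symm (B.next (f.arrow a))) B.next :=
      fun a => f.arrow.apply_symm_apply _
    rw [← f.arrow.apply_eq_iff_eq, (h.iterate_right _).eq, B.iterate_len]

theorem pathAlgHom_cycle {V' E' : Type} [Fintype V'] [DecidableEq V'] {s' t' : E' → V'}
    (B : BrauerData s' t') (f : QuiverIso s t s' t') (a : E) :
    f.pathAlgHom (fun _ => 1) ((B.comap f).cycle k a) = B.cycle k (f.arrow a) := by
  have semiconj : Function.Semiconj f.arrow (B.comap f).next B.next :=
    fun a => f.arrow.apply_symm_apply _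
  rw [cycle, f.pathAlgHom_walk semiconj fun _ => rfl, one_pow, one_smul, cycle, comap_len]

theorem IsPresentation.comap {V' E' : Type} [Fintype V'] [DecidableEq V'] {s' t' : E' → V'}
    {B : BrauerData s' t'} {π : PathAlg k V' E' s' t' →ₐ[k] C} (hπ : B.IsPresentation π)
    (f : QuiverIso s t s' t') : (B.comap f).IsPresentation (π.comp (f.pathAlgHom fun _ => 1)) where
  toIsAdmissiblePresentation := hπ.toIsAdmissiblePresentation.comp_pathAlgHom f 1
  mul_eq_zero a b hb := by
    simpa using hπ.mul_eq_zero _ _ fun h => hb (f.arrow.eq_symm_apply.2 h)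
  cycle_eq_cycle a b hab := by
    simp only [AlgHom.comp_apply, pathAlgHom_cycle]
    exact hπ.cycle_eq_cycle _ _ (by rw [f.src_arrow, f.src_arrow, hab])
  cycle_mul_eq_zero a b := by
    simpa [pathAlgHom_cycle] using hπ.cycle_mul_eq_zero (f.arrow a) (f.arrow b)
  cycle_ne_zero a := by
    simpa only [AlgHom.comp_apply, pathAlgHom_cycle] using hπ.cycle_ne_zero (f.arrow a)

end BrauerData

end BrauerData

section NormalForm

namespace BrauerData

variable {k V E : Type} [CommRing k] [Fintype V] [DecidableEq V] {s t : E → V}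
  {B : BrauerData s t} {C : Type} [Ring C] [Algebra k C]

variable (B) in
/-- Indices for the standard basis of the algebra of shape `B`: the vertices, the proper subwalks of
the cycles, and the socle elements. -/
inductive NormalForm : Type
  | idem (v : V)
  | path (a : E) (n : ℕ) (pos : 0 < n) (lt_len : n < B.len a)
  | socle (v : V)

namespace NormalForm

/-- The element of the path algebra with a given index; `g` chooses an arrow starting at each
vertex, whose cycle represents the socle. -/
def value (k : Type) [CommRing k] (g : V → E) : B.NormalForm → PathAlg k V E s t
  | idem v => pV k s t v
  | path a n _ _ => walk k s t B.next a n
  | socle v => B.cycle k (g v)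

/-- The complementary element, which completes a normal form to a cycle. -/
def dual (k : Type) [CommRing k] (g : V → E) : B.NormalForm → PathAlg k V E s t
  | idem v => B.cycle k (g v)
  | path a n _ _ => walk k s t B.next (B.next^[n] a) (B.len a - n)
  | socle v => pV k s t v

/-- The length of a normal form, infinite for socle elements. -/
def length : B.NormalForm → ℕ∞
  | idem _ => 0
  | path _ n _ _ => n
  | socle _ => ⊤

variable {g : V → E} {π : PathAlg k V E s t →ₐ[k] C}

theorem map_value_mul_dual_ne_zero (hg : ∀ v, s (g v) = v) (hπ : ∀ a, π (B.cycle k a) ≠ 0)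
    (i : B.NormalForm) : π (i.value k g * i.dual k g) ≠ 0 := by
  cases i with
  | idem v =>
    rw [value, dual, cycle, pV_mul_walk, if_pos (hg v).symm]
    exact hπ (g v)
  | path a n pos lt_len =>
    rw [value, dual, ← walk_add B.tgt_eq, Nat.add_sub_cancel' lt_len.le]
    exact hπ a
  | socle v =>
    rw [value, dual, cycle_mul_pV, if_pos (hg v)]
    exact hπ (g v)

theorem map_value_mul_dual_eq_zero (hg : ∀ v, s (g v) = v) (hπ : B.Relations π)
    (i j : B.NormalForm) (hij : j ≠ i) (hlen : i.length ≤ j.length) :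
    π (j.value k g * i.dual k g) = 0 := by
  have len_ne_zero (a : E) : B.len a ≠ 0 := by have := B.two_le_len a; lia
  cases i with
  | idem v =>
    cases j with
    | idem w =>
      rw [value, dual, cycle, pV_mul_walk, if_neg, map_zero]
      rw [hg]
      exact fun h => hij (h ▸ rfl)
    | path a n pos lt_len =>
      refine hπ.map_walk_mul_walk_eq_zero pos.ne' (len_ne_zero _) fun h => ?_
      rw [h, len_iterate_next]
      lia
    | socle w =>
      refine hπ.map_walk_mul_walk_eq_zero (len_ne_zero _) (len_ne_zero _) fun _ => ?_
      have := len_ne_zero (g v)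
      lia
  | path a n pos lt_len =>
    cases j with
    | idem w => simp [length, pos.ne'] at hlen
    | path b m pos' lt_len' =>
      refine hπ.map_walk_mul_walk_eq_zero pos'.ne' (by lia) fun h => ?_
      have len_eq : B.len a = B.len b := by
        rw [← B.len_iterate_next a n, h, B.len_iterate_next]
      have ne : n ≠ m := by
        rintro rfl
        obtain rfl := B.next_injective.iterate n h
        exact hij rfl
      simp only [length, Nat.cast_le] at hlen
      lia
    | socle w => exact hπ.map_walk_mul_walk_eq_zero (len_ne_zero _) (by lia) fun _ => by lia
  | socle v =>
    cases j with
    | idem w => simp [length] at hlen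
    | path a n pos lt_len => simp [length] at hlen
    | socle w =>
      rw [value, dual, cycle_mul_pV, if_neg, map_zero]
      rw [hg]
      exact fun h => hij (h ▸ rfl)

theorem walk_mem_span_value_sup_ker (hg : ∀ v, s (g v) = v) (hπ : B.Relations π) (a : E) {n : ℕ}
    (hn : n ≠ 0) :
    walk k s t B.next a n ∈ Submodule.span k (Set.range (value k g : B.NormalForm → _)) ⊔
      LinearMap.ker π.toLinearMap := by
  obtain lt | eq | gt := lt_trichotomy n (B.len a)
  · exact Submodule.mem_sup_left (Submodule.subset_span ⟨path a n (by lia) lt, rfl⟩)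
  · rw [eq, ← cycle_def, ← add_sub_cancel (B.cycle k (g (s a))) (B.cycle k a)]
    refine Submodule.add_mem_sup (Submodule.subset_span ⟨socle (s a), rfl⟩) ?_
    rw [LinearMap.mem_ker, AlgHom.toLinearMap_apply, map_sub,
      hπ.cycle_eq_cycle a (g (s a)) (hg _).symm, sub_self]
  · exact Submodule.mem_sup_right (hπ.map_walk_eq_zero gt)

theorem span_value_sup_ker (hg : ∀ v, s (g v) = v) (hπ : B.Relations π) :
    Submodule.span k (Set.range (value k g : B.NormalForm → _)) ⊔ LinearMap.ker π.toLinearMap =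
      ⊤ := by
  have ker_mul {y z : PathAlg k V E s t} (hy : π y = 0) : π (y * z) = 0 := by
    rw [map_mul, hy, zero_mul]
  have mem_of_ite {p : Prop} [Decidable p] {y : PathAlg k V E s t}
      {S : Submodule k (PathAlg k V E s t)} (hy : y ∈ S) : (if p then y else 0) ∈ S := by
    split_ifs
    exacts [hy, S.zero_mem]
  have walk_mem (a : E) {n : ℕ} (hn : n ≠ 0) := walk_mem_span_value_sup_ker hg hπ a hn
  rw [← Submodule.span_eq (LinearMap.ker π.toLinearMap), ← Submodule.span_union] at walk_mem ⊢
  refine span_eq_top_of_mul_mem (fun v => Submodule.subset_span (.inl ⟨idem v, rfl⟩)) ?_ ?_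
  · rintro _ (⟨i, rfl⟩ | hz) v
    · have value_mem := Submodule.subset_span (R := k)
        (Set.mem_union_left (LinearMap.ker π.toLinearMap) (Set.mem_range_self (f := value k g) i))
      cases i with
      | idem w => exact pV_mul_pV (k := k) w v ▸ mem_of_ite value_mem
      | path a n _ _ => exact walk_mul_pV (k := k) B.tgt_eq a n v ▸ mem_of_ite value_mem
      | socle w => exact B.cycle_mul_pV (k := k) (g w) v ▸ mem_of_ite value_mem
    · exact Submodule.subset_span (.inr (ker_mul hz))
  · rintro _ (⟨i, rfl⟩ | hz) b
    · cases i with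
      | idem w =>
        rw [value, pV_mul_pA, ← walk_one (σ := B.next)]
        exact mem_of_ite (walk_mem b one_ne_zero)
      | path a n pos _ =>
        by_cases hb : b = B.next^[n] a
        · subst hb
          exact walk_mem a n.succ_ne_zero
        · exact Submodule.subset_span (.inr
            (map_walk_mul_pA_eq_zero hπ.mul_eq_zero a pos.ne' hb))
      | socle w => exact Submodule.subset_span (.inr (hπ.cycle_mul_eq_zero _ _))
    · exact Submodule.subset_span (.inr (ker_mul hz))

end NormalForm

end BrauerData

end NormalForm

section Kernel

theorem linearIndependent_of_triangular {k ι L M N : Type*} [Field k] [AddCommGroup M] [Module k M]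
    [AddCommGroup N] [Module k N] [LinearOrder L] {v : ι → M} (ℓ : ι → L) (f : ι → M →ₗ[k] N)
    (diagonal : ∀ i, f i (v i) ≠ 0) (triangular : ∀ i j, j ≠ i → ℓ i ≤ ℓ j → f i (v j) = 0) :
    LinearIndependent k v := by
  classical
  refine linearIndependent_iff'.2 fun S c hsum => ?_
  by_contra! hc
  obtain ⟨i, hi, hmin⟩ := Finset.exists_min_image ({i ∈ S | c i ≠ 0}) ℓ
    (hc.imp fun i hi => Finset.mem_filter.2 hi)
  rw [Finset.mem_filter] at hi
  have hfi : c i • f i (v i) = 0 := by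
    calc c i • f i (v i) = ∑ j ∈ S, c j • f i (v j) := by
          rw [Finset.sum_eq_single_of_mem i hi.1]
          intro j hj hji
          by_cases hcj : c j = 0
          · rw [hcj, zero_smul]
          · rw [triangular i j hji (hmin j (Finset.mem_filter.2 ⟨hj, hcj⟩)), smul_zero]
      _ = f i (∑ j ∈ S, c j • v j) := by simp only [map_sum, map_smul]
      _ = 0 := by rw [hsum, map_zero]
  exact (smul_ne_zero hi.2 (diagonal i)) hfi

namespace BrauerData

variable {k V E : Type} [Field k] [Fintype V] [DecidableEq V] {s t : E → V}
  {B : BrauerData s t} {C D : Type} [Ring C] [Algebra k C] [Ring D] [Algebra k D]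

theorem NormalForm.linearIndependent_map_value {g : V → E} {π : PathAlg k V E s t →ₐ[k] C}
    (hg : ∀ v, s (g v) = v) (hπ : B.Relations π)
    (hcycle : ∀ a, π (B.cycle k a) ≠ 0) :
    LinearIndependent k fun i : B.NormalForm => π (i.value k g) := by
  refine linearIndependent_of_triangular length
    (fun i => LinearMap.mulRight k (π (i.dual k g))) (fun i => ?_) fun i j hij hlen => ?_
  · rw [LinearMap.mulRight_apply, ← map_mul]
    exact map_value_mul_dual_ne_zero hg hcycle i
  · rw [LinearMap.mulRight_apply, ← map_mul]
    exact map_value_mul_dual_eq_zero hg hπ i j hij hlen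

theorem IsPresentation.map_eq_zero_of_relations {π : PathAlg k V E s t →ₐ[k] C}
    {ρ : PathAlg k V E s t →ₐ[k] D} (hπ : B.IsPresentation π) (hρ : B.Relations ρ)
    (hs : Function.Surjective s) {y : PathAlg k V E s t} (hy : π y = 0) : ρ y = 0 := by
  obtain ⟨g, hg⟩ := hs.hasRightInverse
  have hy_mem := NormalForm.span_value_sup_ker hg (hπ.toRelations.prod hρ) ▸
    Submodule.mem_top (x := y)
  obtain ⟨u, hu, z, hz, rfl⟩ := Submodule.mem_sup.1 hy_mem
  obtain ⟨hπz, hρz⟩ : π z = 0 ∧ ρ z = 0 := Prod.ext_iff.1 hz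
  have hπu : π u = 0 := by rwa [map_add, hπz, add_zero] at hy
  have hu_zero : u = 0 := Submodule.disjoint_def.1
    (Submodule.range_ker_disjoint (f := π.toLinearMap)
      (NormalForm.linearIndependent_map_value hg hπ.toRelations hπ.cycle_ne_zero)) u hu hπu
  rw [hu_zero, zero_add, hρz]

end BrauerData

end Kernel

section PresAlg

variable {k V E : Type} [CommRing k] [Fintype V] [DecidableEq V] {s t : E → V}
  {rels : Set (FreeAlgebra k (PGen V E))}

theorem presQuotMap_mkAlgHom (y : FreeAlgebra k (PGen V E)) :
    presQuotMap k s t rels (RingQuot.mkAlgHom k _ y) = RingQuot.mkAlgHom k _ y :=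
  RingQuot.liftAlgHom_mkAlgHom_apply ..

theorem presQuotMap_surjective : Function.Surjective (presQuotMap k s t rels) := fun z => by
  obtain ⟨y, rfl⟩ := RingQuot.mkAlgHom_surjective k _ z
  exact ⟨_, presQuotMap_mkAlgHom y⟩

theorem presQuotMap_mkAlgHom_eq_zero {r : FreeAlgebra k (PGen V E)} (hr : r ∈ rels) :
    presQuotMap k s t rels (RingQuot.mkAlgHom k _ r) = 0 := by
  rw [presQuotMap_mkAlgHom, RingQuot.mkAlgHom_rel k (PresRel.rel hr), map_zero]

variable {A : Type} [Ring A] [Algebra k A] {π : PathAlg k V E s t →ₐ[k] A}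

theorem exists_algHom_comp_presQuotMap (hπ : ∀ r ∈ rels, π (RingQuot.mkAlgHom k _ r) = 0) :
    ∃ φ : PresAlg k V E s t rels →ₐ[k] A, ∀ y, φ (presQuotMap k s t rels y) = π y := by
  refine ⟨RingQuot.liftAlgHom k ⟨π.comp (RingQuot.mkAlgHom k _), ?_⟩, fun y => ?_⟩
  · rintro _ _ (h | hr)
    · rw [AlgHom.comp_apply, RingQuot.mkAlgHom_rel k h, AlgHom.comp_apply]
    · rw [map_zero, AlgHom.comp_apply, hπ _ hr]
  · obtain ⟨y, rfl⟩ := RingQuot.mkAlgHom_surjective k _ y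
    rw [presQuotMap_mkAlgHom]
    exact RingQuot.liftAlgHom_mkAlgHom_apply ..

theorem IsAdmissiblePresentation.relsAdmissible (hπ : IsAdmissiblePresentation π)
    (hker : ∀ y, presQuotMap k s t rels y = 0 ↔ π y = 0) : RelsAdmissible k s t rels := by
  obtain ⟨N, hN⟩ := hπ.exists_map_pow_eq_zero
  refine ⟨fun x (hx : presQuotMap k s t rels x = 0) a => ⟨?_, ?_⟩,
    fun y hy => hπ.mem_sq_of_map_eq_zero y ((hker y).1 hy), N, fun y hy => (hker y).2 (hN y hy)⟩
  · exact show presQuotMap k s t rels (a * x) = 0 by rw [map_mul, hx, mul_zero]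
  · exact show presQuotMap k s t rels (x * a) = 0 by rw [map_mul, hx, zero_mul]

end PresAlg

namespace BrauerData

variable {k V E : Type} [Field k] [Fintype V] [DecidableEq V] {s t : E → V}
  {B : BrauerData s t} {C : Type} [Ring C] [Algebra k C]

/-- The relations `rels` hold under an algebra map exactly when the relations of shape `B` do. -/
def IsDefinedBy (B : BrauerData s t) (rels : Set (FreeAlgebra k (PGen V E))) : Prop :=
  ∀ (C : Type) [Ring C] [Algebra k C] (ρ : PathAlg k V E s t →ₐ[k] C),
    (∀ r ∈ rels, ρ (RingQuot.mkAlgHom k _ r) = 0) ↔ B.Relations ρ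

theorem IsPresentation.relsAdmissible_and_nonempty_algEquiv {π : PathAlg k V E s t →ₐ[k] C}
    (hπ : B.IsPresentation π) (hs : Function.Surjective s)
    {rels : Set (FreeAlgebra k (PGen V E))} (hrels : B.IsDefinedBy rels) :
    RelsAdmissible k s t rels ∧ Nonempty (C ≃ₐ[k] PresAlg k V E s t rels) := by
  set q := presQuotMap k s t rels
  have hq : B.Relations q := (hrels _ q).1 fun _ => presQuotMap_mkAlgHom_eq_zero
  obtain ⟨φ, φ_q⟩ := exists_algHom_comp_presQuotMap ((hrels C π).2 hπ.toRelations)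
  have q_eq_zero_iff (y) : q y = 0 ↔ π y = 0 :=
    ⟨fun h => by rw [← φ_q, h, map_zero], fun h => hπ.map_eq_zero_of_relations hq hs h⟩
  have φ_injective : Function.Injective φ := (injective_iff_map_eq_zero φ).2 fun z hz => by
    obtain ⟨y, rfl⟩ := presQuotMap_surjective z
    exact (q_eq_zero_iff y).2 (φ_q y ▸ hz)
  have φ_surjective : Function.Surjective φ :=
    fun z => (hπ.surjective z).imp' q fun y hy => (φ_q y).trans hy
  exact ⟨hπ.toIsAdmissiblePresentation.relsAdmissible q_eq_zero_iff,
    ⟨(AlgEquiv.ofBijective φ ⟨φ_injective, φ_surjective⟩).symm⟩⟩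

end BrauerData

section Symmetric

variable {k V E : Type} [Field k] [Fintype V] [DecidableEq V] {s t : E → V}
  {A : Type} [Ring A] [Algebra k A] {π : PathAlg k V E s t →ₐ[k] A} {Tr : A →ₗ[k] k} {σ : E → E}

/-- The linear form `Tr` turns `A` into a symmetric algebra. -/
structure IsSymmetrizing (Tr : A →ₗ[k] k) : Prop where
  map_mul_comm : ∀ y z, Tr (y * z) = Tr (z * y)
  nondegenerate : ∀ y, y ≠ 0 → ∃ z, Tr (y * z) ≠ 0

/-- The part at the vertex `v` of the right socle of a quotient `π` of the path algebra. -/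
def socleAt (π : PathAlg k V E s t →ₐ[k] A) (v : V) : Submodule k A where
  carrier := {z | π (pV k s t v) * z = z ∧ ∀ b, z * π (pA k s t b) = 0}
  add_mem' hy hz := ⟨by rw [mul_add, hy.1, hz.1], fun b => by rw [add_mul, hy.2, hz.2, add_zero]⟩
  zero_mem' := ⟨mul_zero _, fun _ => zero_mul _⟩
  smul_mem' c z hz := ⟨by rw [mul_smul_comm, hz.1], fun b => by
    rw [smul_mul_assoc, hz.2, smul_zero]⟩

namespace IsAdmissiblePresentation

theorem exists_mul_mem_socleAt (hπ : IsAdmissiblePresentation π) {v : V} {z : A}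
    (hz : π (pV k s t v) * z = z) (hz_ne : z ≠ 0) : ∃ y, z * y ≠ 0 ∧ z * y ∈ socleAt π v := by
  by_contra! hcon
  have exists_mem_pow (n : ℕ) : ∃ y ∈ arrowIdeal k s t ^ n, z * π y ≠ 0 := by
    induction n with
    | zero =>
      exact ⟨1, pow_zero (arrowIdeal k s t) ▸ Submodule.one_le.1 le_rfl, by simpa using hz_ne⟩
    | succ n ih =>
      obtain ⟨y, hy, hzy⟩ := ih
      obtain ⟨b, hb⟩ : ∃ b, z * π y * π (pA k s t b) ≠ 0 := by
        by_contra! hb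
        exact hcon _ hzy ⟨by rw [← mul_assoc, hz], hb⟩
      exact ⟨y * pA k s t b,
        pow_succ (arrowIdeal k s t) n ▸ Submodule.mul_mem_mul hy (pA_mem_arrowIdeal b),
        by rwa [map_mul, ← mul_assoc]⟩
  obtain ⟨N, hN⟩ := hπ.exists_map_pow_eq_zero
  obtain ⟨y, hy, hzy⟩ := exists_mem_pow N
  exact hzy (by rw [hN y hy, mul_zero])

theorem exists_map_walk_eq_zero (hπ : IsAdmissiblePresentation π) (σ : E → E) (a : E) :
    ∃ n, π (walk k s t σ a n) = 0 := by
  obtain ⟨N, hN⟩ := hπ.exists_map_pow_eq_zero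
  obtain ⟨y, hy, hwalk⟩ := exists_mem_arrowIdeal_pow_walk_eq (k := k) (s := s) (t := t) (σ := σ) a N
  exact ⟨N, by rw [hwalk, map_mul, hN y hy, mul_zero]⟩

end IsAdmissiblePresentation

namespace IsSymmetrizing

theorem eq_zero_of_mem_socleAt (hTr : IsSymmetrizing Tr) (hπ : Function.Surjective π) {v : V}
    {z : A} (hz : z ∈ socleAt π v) (hTr_z : Tr z = 0) : z = 0 := by
  by_contra hne
  obtain ⟨y, hy⟩ := hTr.nondegenerate z hne
  obtain ⟨y, rfl⟩ := hπ y
  have pairing_eq_zero : Tr ∘ₗ LinearMap.mulLeft k z ∘ₗ π.toLinearMap = 0 := by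
    refine linearMap_eq_zero_of_pV_of_pA_mul (fun w => ?_) fun a y => ?_
    · change Tr (z * π (pV k s t w)) = 0
      rw [hTr.map_mul_comm, ← hz.1, ← mul_assoc, ← map_mul, pV_mul_pV]
      split_ifs with hwv
      · rw [hwv, hz.1, hTr_z]
      · rw [map_zero, zero_mul, map_zero]
    · change Tr (z * π (pA k s t a * y)) = 0
      rw [map_mul π, ← mul_assoc, hz.2, zero_mul, map_zero]
  exact hy (DFunLike.congr_fun pairing_eq_zero y)

theorem eq_of_mem_socleAt (hTr : IsSymmetrizing Tr) (hπ : Function.Surjective π) {v : V}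
    {y z : A} (hy : y ∈ socleAt π v) (hz : z ∈ socleAt π v) (h : Tr y = Tr z) : y = z :=
  sub_eq_zero.1 (hTr.eq_zero_of_mem_socleAt hπ (sub_mem hy hz) (by rw [map_sub, h, sub_self]))

theorem map_pA_eq_zero_of_src_ne_tgt (hTr : IsSymmetrizing Tr) {a : E} (ha : s a ≠ t a) :
    Tr (π (pA k s t a)) = 0 := by
  rw [← pA_mul_pV_tgt, map_mul, hTr.map_mul_comm, ← map_mul, pV_mul_pA, if_neg ha.symm, map_zero,
    map_zero]

theorem eq_of_map_pA_mem_socleAt (hTr : IsSymmetrizing Tr) (hπ : IsAdmissiblePresentation π)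
    {a : E} (ha : π (pA k s t a) ∈ socleAt π (s a)) {b : E} (hb : s b = s a) : b = a := by
  by_contra hba
  obtain ⟨y, hy_ne, hy⟩ := hπ.exists_mul_mem_socleAt
    (by rw [← map_mul, pV_src_mul_pA]) (hπ.map_pA_ne_zero b)
  have hTr_y : Tr (π (pA k s t b) * y) ≠ 0 :=
    fun h => hy_ne (hTr.eq_zero_of_mem_socleAt hπ.surjective hy h)
  set c := Tr (π (pA k s t a)) / Tr (π (pA k s t b) * y)
  have proportional : π (pA k s t a) = c • (π (pA k s t b) * y) :=
    hTr.eq_of_mem_socleAt hπ.surjective ha (Submodule.smul_mem _ c (hb ▸ hy))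
      (by rw [map_smul, smul_eq_mul, div_mul_cancel₀ _ hTr_y])
  rw [← mul_smul_comm] at proportional
  exact hπ.map_pA_ne_map_pA_mul hba _ proportional

end IsSymmetrizing

theorem exists_arrow_ne_of_qConnected {V E : Type} [Nontrivial V] {s t : E → V}
    (h : QConnected s t) (v : V) : ∃ c, s c ≠ t c ∧ (s c = v ∨ t c = v) := by
  by_contra! hcon
  obtain ⟨w, hw⟩ := exists_ne v
  suffices reachable_eq : ∀ u, Relation.ReflTransGen
      (fun a b => ∃ e, (s e = a ∧ t e = b) ∨ (s e = b ∧ t e = a)) v u → u = v from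
    hw (reachable_eq w (h v w))
  intro u hu
  induction hu with
  | refl => rfl
  | tail _ step ih =>
    obtain ⟨c, ⟨hs, ht⟩ | ⟨hs, ht⟩⟩ := step
    · by_contra hne
      exact (hcon c (by rw [hs, ht, ih]; exact Ne.symm hne)).1 (hs.trans ih)
    · by_contra hne
      exact (hcon c (by rwa [hs, ht, ih])).2 (ht.trans ih)

theorem map_pV_mul_mul_pV_eq_zero {a : E} (ha : π (pA k s t a) ∈ socleAt π (s a))
    (loop : s a = t a) (hunique : ∀ b, s b = s a → b = a) {w : V} (hw : w ≠ s a)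
    (y : PathAlg k V E s t) : π (pV k s t (s a) * y * pV k s t w) = 0 := by
  have ha_w : t a ≠ w := loop ▸ hw.symm
  have pA_mul (y : PathAlg k V E s t) : π (pA k s t a * y * pV k s t w) = 0 := by
    refine DFunLike.congr_fun (linearMap_eq_zero_of_pV_of_pA_mul (f := π.toLinearMap ∘ₗ
      LinearMap.mulRight k (pV k s t w) ∘ₗ LinearMap.mulLeft k (pA k s t a))
      (fun u => ?_) fun b y => ?_) y
    · change π (pA k s t a * pV k s t u * pV k s t w) = 0
      rw [pA_mul_pV, ite_mul, pA_mul_pV, if_neg ha_w, zero_mul, ite_self, map_zero]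
    · change π (pA k s t a * (pA k s t b * y) * pV k s t w) = 0
      rw [map_mul, map_mul, map_mul, ← mul_assoc, ha.2, zero_mul, zero_mul]
  refine DFunLike.congr_fun (linearMap_eq_zero_of_pV_of_pA_mul (f := π.toLinearMap ∘ₗ
    LinearMap.mulRight k (pV k s t w) ∘ₗ LinearMap.mulLeft k (pV k s t (s a)))
    (fun u => ?_) fun b y => ?_) y
  · change π (pV k s t (s a) * pV k s t u * pV k s t w) = 0
    rw [pV_mul_pV, ite_mul, pV_mul_pV, if_neg hw.symm, zero_mul, ite_self, map_zero]
  · change π (pV k s t (s a) * (pA k s t b * y) * pV k s t w) = 0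
    rw [← mul_assoc, pV_mul_pA]
    split_ifs with hb
    · rw [hunique b hb.symm, pA_mul]
    · rw [zero_mul, zero_mul, map_zero]

theorem IsSymmetrizing.map_pA_notMem_socleAt [Nontrivial V] (hTr : IsSymmetrizing Tr)
    (hπ : IsAdmissiblePresentation π) (hconn : QConnected s t) (a : E) :
    π (pA k s t a) ∉ socleAt π (s a) := by
  intro ha
  have loop : s a = t a := by
    by_contra hne
    exact hπ.map_pA_ne_zero a
      (hTr.eq_zero_of_mem_socleAt hπ.surjective ha (hTr.map_pA_eq_zero_of_src_ne_tgt hne))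
  have hunique (b : E) (hb : s b = s a) : b = a := hTr.eq_of_map_pA_mem_socleAt hπ ha hb
  obtain ⟨c, hc, hsc | htc⟩ := exists_arrow_ne_of_qConnected hconn (s a)
  · obtain rfl := hunique c hsc
    exact hc loop
  · obtain ⟨y, hy⟩ := hTr.nondegenerate _ (hπ.map_pA_ne_zero c)
    obtain ⟨y, rfl⟩ := hπ.surjective y
    refine hy ?_
    calc Tr (π (pA k s t c) * π y)
        = Tr (π (pV k s t (s c)) * π (pA k s t c * pV k s t (s a) * y)) := by
          rw [← htc, pA_mul_pV_tgt, ← map_mul, ← map_mul, ← mul_assoc, pV_src_mul_pA]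
      _ = Tr (π (pA k s t c) * π (pV k s t (s a) * y * pV k s t (s c))) := by
          rw [hTr.map_mul_comm, ← map_mul, ← map_mul]
          simp only [mul_assoc]
      _ = 0 := by
          rw [map_pV_mul_mul_pV_eq_zero ha loop hunique (htc ▸ hc), mul_zero, map_zero]

/-- The arrow `σ a` is the only one whose product with `a` is nonzero in the quotient `π`. -/
structure IsSuccessor (π : PathAlg k V E s t →ₐ[k] A) (σ : E → E) : Prop where
  map_mul_ne_zero : ∀ a, π (pA k s t a * pA k s t (σ a)) ≠ 0
  map_mul_eq_zero : ∀ a b, b ≠ σ a → π (pA k s t a * pA k s t b) = 0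

theorem IsSymmetrizing.exists_isSuccessor [Nontrivial V] (hTr : IsSymmetrizing Tr)
    (hπ : IsAdmissiblePresentation π) (hconn : QConnected s t)
    (hright : ∀ a b b', π (pA k s t a * pA k s t b) ≠ 0 → π (pA k s t a * pA k s t b') ≠ 0 →
      b = b') : ∃ σ, IsSuccessor π σ := by
  have exists_next (a : E) : ∃ b, π (pA k s t a * pA k s t b) ≠ 0 := by
    by_contra! hcon
    exact hTr.map_pA_notMem_socleAt hπ hconn a
      ⟨by rw [← map_mul, pV_src_mul_pA], fun b => by rw [← map_mul, hcon]⟩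
  choose σ hσ using exists_next
  exact ⟨σ, hσ, fun a b hb => by_contra fun h => hb (hright a b (σ a) h (hσ a))⟩

namespace IsSuccessor

theorem tgt_eq (hσ : IsSuccessor π σ) (a : E) : t a = s (σ a) := by
  by_contra h
  exact hσ.map_mul_ne_zero a (by rw [pA_mul_pA_of_ne h, map_zero])

theorem injective (hσ : IsSuccessor π σ)
    (hleft : ∀ a b b', π (pA k s t b * pA k s t a) ≠ 0 → π (pA k s t b' * pA k s t a) ≠ 0 →
      b = b') : Function.Injective σ := fun a b hab =>
  hleft (σ a) a b (hσ.map_mul_ne_zero a) (hab ▸ hσ.map_mul_ne_zero b)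

theorem map_walk_eq_zero_of_le (hσ : IsSuccessor π σ) {a : E} {m n : ℕ} (hmn : m ≤ n)
    (h : π (walk k s t σ a m) = 0) : π (walk k s t σ a n) = 0 := by
  rw [← Nat.add_sub_cancel' hmn, walk_add hσ.tgt_eq, map_mul, h, zero_mul]

theorem exists_maximal_walk (hσ : IsSuccessor π σ) (hπ : IsAdmissiblePresentation π) (a : E) :
    ∃ n, 2 ≤ n ∧ π (walk k s t σ a n) ≠ 0 ∧ π (walk k s t σ a (n + 1)) = 0 := by
  classical
  have hex := hπ.exists_map_walk_eq_zero σ a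
  have two_lt_find : 2 < Nat.find hex := by
    by_contra! hle
    refine hσ.map_mul_ne_zero a ?_
    rw [← walk_one (σ := σ) a]
    exact hσ.map_walk_eq_zero_of_le hle (Nat.find_spec hex)
  refine ⟨Nat.find hex - 1, by lia, Nat.find_min hex (by lia), ?_⟩
  rw [Nat.sub_add_cancel (by lia)]
  exact Nat.find_spec hex

theorem map_walk_mem_socleAt (hσ : IsSuccessor π σ) {a : E} {n : ℕ} (hn : n ≠ 0)
    (h : π (walk k s t σ a (n + 1)) = 0) : π (walk k s t σ a n) ∈ socleAt π (s a) := by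
  refine ⟨by rw [← map_mul, pV_mul_walk, if_pos rfl], fun b => ?_⟩
  rw [← map_mul]
  by_cases hb : b = σ^[n] a
  · rwa [hb]
  · exact map_walk_mul_pA_eq_zero hσ.map_mul_eq_zero a hn hb

theorem trace_walk_next (hσ : IsSuccessor π σ) (hTr : IsSymmetrizing Tr) {a : E} {n : ℕ}
    (hn : n ≠ 0) (ha : σ^[n] a = a) :
    Tr (π (walk k s t σ (σ a) n)) = Tr (π (walk k s t σ a n)) := by
  obtain ⟨n, rfl⟩ := Nat.exists_eq_succ_of_ne_zero hn
  rw [Nat.succ_eq_add_one, walk_succ, walk_succ' hσ.tgt_eq a, ← Function.iterate_succ_apply, ha,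
    map_mul π, map_mul π, hTr.map_mul_comm]

theorem iterate_eq_of_trace_walk_ne_zero (hσ : IsSuccessor π σ) (hTr : IsSymmetrizing Tr) {a : E}
    {n : ℕ} (hn : 2 ≤ n) (h : Tr (π (walk k s t σ a n)) ≠ 0) : σ^[n] a = a := by
  obtain ⟨m, rfl⟩ := Nat.exists_eq_add_of_le' hn
  by_contra hne
  refine h ?_
  rw [walk_succ, map_mul π, hTr.map_mul_comm, walk_succ' hσ.tgt_eq, map_mul π, ← mul_assoc,
    ← map_mul π, hσ.map_mul_eq_zero _ _ ?_, zero_mul, map_zero]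
  rw [← Function.iterate_succ_apply' σ]
  exact Ne.symm hne

theorem exists_brauerData (hσ : IsSuccessor π σ) (hinj : Function.Injective σ)
    (hπ : IsAdmissiblePresentation π) (hTr : IsSymmetrizing Tr) :
    ∃ B : BrauerData s t, B.next = σ ∧ (∀ a, π (B.cycle k a) ∈ socleAt π (s a)) ∧
      ∀ a, Tr (π (B.cycle k a)) ≠ 0 := by
  choose len two_le_len walk_ne_zero walk_eq_zero using hσ.exists_maximal_walk hπ
  have mem_socleAt (a : E) : π (walk k s t σ a (len a)) ∈ socleAt π (s a) :=
    hσ.map_walk_mem_socleAt (by have := two_le_len a; lia) (walk_eq_zero a)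
  have trace_ne_zero (a : E) : Tr (π (walk k s t σ a (len a))) ≠ 0 := fun h =>
    walk_ne_zero a (hTr.eq_zero_of_mem_socleAt hπ.surjective (mem_socleAt a) h)
  have le_len {a : E} {n : ℕ} (h : Tr (π (walk k s t σ a n)) ≠ 0) : n ≤ len a := by
    by_contra! hlt
    exact h (by rw [hσ.map_walk_eq_zero_of_le hlt (walk_eq_zero a), map_zero])
  have iterate_len (a : E) : σ^[len a] a = a :=
    hσ.iterate_eq_of_trace_walk_ne_zero hTr (two_le_len a) (trace_ne_zero a)
  have len_next (a : E) : len (σ a) = len a := by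
    have iterate_len_next : σ^[len (σ a)] a = a := hinj <| by
      rw [← Function.iterate_succ_apply' σ, Function.iterate_succ_apply, iterate_len]
    refine le_antisymm (le_len ?_) (le_len ?_)
    · rw [← hσ.trace_walk_next hTr (by have := two_le_len (σ a); lia) iterate_len_next]
      exact trace_ne_zero (σ a)
    · rw [hσ.trace_walk_next hTr (by have := two_le_len a; lia) (iterate_len a)]
      exact trace_ne_zero a
  exact ⟨⟨σ, len, hinj, hσ.tgt_eq, two_le_len, len_next, iterate_len⟩, rfl, mem_socleAt,
    trace_ne_zero⟩

end IsSuccessor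

theorem exists_units_pow_mul_eq_one [IsAlgClosed k] {r : k} (hr : r ≠ 0) {n : ℕ} (hn : n ≠ 0) :
    ∃ c : kˣ, (c : k) ^ n * r = 1 := by
  obtain ⟨c, hc⟩ := IsAlgClosed.exists_pow_nat_eq r⁻¹ (Nat.pos_of_ne_zero hn)
  have hc_ne : c ≠ 0 := by
    rintro rfl
    exact inv_ne_zero hr (by rw [← hc, zero_pow hn])
  exact ⟨Units.mk0 c hc_ne, by rw [Units.val_mk0, hc, inv_mul_cancel₀ hr]⟩

namespace BrauerData

variable {B : BrauerData s t}

theorem exists_normalizing_scalars [IsAlgClosed k] (hTr : IsSymmetrizing Tr)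
    (hB : IsSuccessor π B.next) (trace_ne_zero : ∀ a, Tr (π (B.cycle k a)) ≠ 0) :
    ∃ c : E → kˣ, (∀ a, c (B.next a) = c a) ∧
      ∀ a, (c a : k) ^ B.len a * Tr (π (B.cycle k a)) = 1 := by
  have len_ne_zero (a : E) : B.len a ≠ 0 := by have := B.two_le_len a; lia
  choose! root root_spec using fun (r : k) (n : ℕ) (hr : r ≠ 0) (hn : n ≠ 0) =>
    exists_units_pow_mul_eq_one hr hn
  refine ⟨fun a => root (Tr (π (B.cycle k a))) (B.len a), fun a => ?_,
    fun a => root_spec _ _ (trace_ne_zero a) (len_ne_zero a)⟩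
  simp only [BrauerData.cycle, B.len_next,
    hB.trace_walk_next hTr (len_ne_zero a) (B.iterate_len a)]

theorem exists_isPresentation [IsAlgClosed k] (hπ : IsAdmissiblePresentation π)
    (hTr : IsSymmetrizing Tr) (hB : IsSuccessor π B.next)
    (mem_socleAt : ∀ a, π (B.cycle k a) ∈ socleAt π (s a))
    (trace_ne_zero : ∀ a, Tr (π (B.cycle k a)) ≠ 0) :
    ∃ π' : PathAlg k V E s t →ₐ[k] A, B.IsPresentation π' := by
  obtain ⟨c, c_next, c_spec⟩ := exists_normalizing_scalars hTr hB trace_ne_zero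
  let π' := π.comp ((QuiverIso.refl s t).pathAlgHom fun a => ↑(c a))
  have π'_pA (a : E) : π' (pA k s t a) = (c a : k) • π (pA k s t a) := by
    simp [π']
  have π'_cycle (a : E) : π' (B.cycle k a) = (c a : k) ^ B.len a • π (B.cycle k a) := by
    rw [AlgHom.comp_apply, cycle, QuiverIso.pathAlgHom_walk (σ' := B.next) _ (fun _ => rfl)
      (by simp [c_next]), map_smul]
    rfl
  have π'_cycle_mem (a : E) : π' (B.cycle k a) ∈ socleAt π (s a) :=
    π'_cycle a ▸ Submodule.smul_mem _ _ (mem_socleAt a)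
  have trace_π'_cycle (a : E) : Tr (π' (B.cycle k a)) = 1 := by
    rw [π'_cycle, map_smul, smul_eq_mul, c_spec]
  refine ⟨π', hπ.comp_pathAlgHom _ c, ⟨fun a b hb => ?_, fun a b hab => ?_, fun a b => ?_⟩,
    fun a h => ?_⟩
  · rw [map_mul, π'_pA, π'_pA, smul_mul_smul_comm, ← map_mul, hB.map_mul_eq_zero a b hb, smul_zero]
  · exact hTr.eq_of_mem_socleAt hπ.surjective (π'_cycle_mem a) (hab ▸ π'_cycle_mem b)
      (by rw [trace_π'_cycle, trace_π'_cycle])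
  · rw [map_mul, π'_pA, mul_smul_comm, (π'_cycle_mem a).2, smul_zero]
  · exact zero_ne_one ((map_zero Tr).symm.trans (h ▸ trace_π'_cycle a))

end BrauerData

theorem IsAdmissiblePresentation.exists_brauerData_isPresentation [IsAlgClosed k] [Nontrivial V]
    (hπ : IsAdmissiblePresentation π) (hsym : IsSymmetricAlgebra' k A) (hconn : QConnected s t)
    (hright : ∀ a b b', π (pA k s t a * pA k s t b) ≠ 0 → π (pA k s t a * pA k s t b') ≠ 0 →
      b = b')
    (hleft : ∀ a b b', π (pA k s t b * pA k s t a) ≠ 0 → π (pA k s t b' * pA k s t a) ≠ 0 →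
      b = b') :
    ∃ (B : BrauerData s t) (π' : PathAlg k V E s t →ₐ[k] A), B.IsPresentation π' := by
  obtain ⟨Tr, map_mul_comm, nondegenerate⟩ := hsym
  have hTr : IsSymmetrizing Tr := ⟨map_mul_comm, nondegenerate⟩
  obtain ⟨σ, hσ⟩ := hTr.exists_isSuccessor hπ hconn hright
  obtain ⟨B, rfl, mem_socleAt, trace_ne_zero⟩ :=
    hσ.exists_brauerData (hσ.injective hleft) hπ hTr
  exact ⟨B, B.exists_isPresentation hπ hTr hσ mem_socleAt trace_ne_zero⟩

end Symmetric

section TwoVertexClassification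

namespace BrauerData

section

variable {k V E : Type} [CommRing k] {s t : E → V}

theorem card_tgt_eq_card_src [Fintype E] [DecidableEq V] (B : BrauerData s t) (v : V) :
    Finset.card {a | t a = v} = Finset.card {a | s a = v} := by
  refine Finset.card_bijective B.next (Finite.injective_iff_bijective.1 B.next_injective)
    fun a => ?_
  rw [Finset.mem_filter_univ, Finset.mem_filter_univ, B.tgt_eq]

variable [Fintype V] [DecidableEq V] {B : BrauerData s t} {C : Type} [Ring C] [Algebra k C]
  {ρ : PathAlg k V E s t →ₐ[k] C}

theorem exists_cycle_eq_pow {a : E} {n : ℕ} (hn : n ≠ 0) (ha : B.next^[n] a = a)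
    (hmin : ∀ i < n, i ≠ 0 → B.next^[i] a ≠ a) :
    ∃ p, 1 ≤ p ∧ ∀ i b, B.next^[i] a = b → B.cycle k b = walk k s t B.next b n ^ p := by
  have dvd : n ∣ B.len a := by
    by_contra hdvd
    exact hmin _ (Nat.mod_lt _ (Nat.pos_of_ne_zero hn)) (hdvd ∘ Nat.dvd_of_mod_eq_zero)
      (Function.IsPeriodicPt.mod (B.iterate_len a) ha)
  obtain ⟨p, hp⟩ := dvd
  have hp_ne : p ≠ 0 := by
    rintro rfl
    have := B.two_le_len a
    lia
  refine ⟨p, Nat.one_le_iff_ne_zero.2 hp_ne, ?_⟩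
  rintro i _ rfl
  refine B.cycle_eq_pow ?_ hp_ne ?_
  · rw [← Function.iterate_add_apply, add_comm, Function.iterate_add_apply, ha]
  · rw [B.len_iterate_next, hp]

theorem relations_iff_of_injective (hs : Function.Injective s) :
    B.Relations ρ ↔ ∀ a, ρ (B.cycle k a * pA k s t a) = 0 := by
  refine ⟨fun hρ a => hρ.cycle_mul_eq_zero a a, fun h => ⟨fun a b hb => ?_, fun a b hab => ?_,
    fun a b => ?_⟩⟩
  · rw [pA_mul_pA_of_ne (B.tgt_eq a ▸ fun h => hb (hs h).symm), map_zero]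
  · rw [hs hab]
  · by_cases hab : a = b
    · rw [← hab, h]
    · have cycle_mul_pV_src : B.cycle k a * pV k s t (s a) = B.cycle k a := by
        rw [B.cycle_mul_pV, if_pos rfl]
      rw [← cycle_mul_pV_src, mul_assoc, pV_mul_pA, if_neg (hs.ne hab), mul_zero, map_zero]

-- In the product `cycle a * a` the cycle can be replaced by one that `a` does not continue, after
-- rotating it to `a * cycle (next a)` if the second arrow is at the target.
theorem relations_iff_of_branching
    (h : ∀ a, (∃ b, b ≠ a ∧ s b = s a) ∨ ∃ b, b ≠ B.next a ∧ s b = t a) :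
    B.Relations ρ ↔ (∀ a b, t a = s b → b ≠ B.next a → ρ (pA k s t a * pA k s t b) = 0) ∧
      ∀ a b, s a = s b → ρ (B.cycle k a) = ρ (B.cycle k b) := by
  refine ⟨fun hρ => ⟨fun a b _ => hρ.mul_eq_zero a b, hρ.cycle_eq_cycle⟩,
    fun ⟨hmul, cycle_eq_cycle⟩ => ?_⟩
  have mul_eq_zero (a b : E) (hb : b ≠ B.next a) : ρ (pA k s t a * pA k s t b) = 0 := by
    by_cases hab : t a = s b
    · exact hmul a b hab hb
    · rw [pA_mul_pA_of_ne hab, map_zero]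
  have cycle_mul_eq_zero (a b : E) (hb : b ≠ a) : ρ (B.cycle k a * pA k s t b) = 0 :=
    map_walk_mul_pA_eq_zero mul_eq_zero a (by have := B.two_le_len a; lia)
      (by rwa [B.iterate_len])
  refine ⟨mul_eq_zero, cycle_eq_cycle, fun a b => ?_⟩
  by_cases hba : b = a
  · subst hba
    obtain ⟨c, hcb, hs⟩ | ⟨c, hcb, hs⟩ := h b
    · rw [map_mul, ← cycle_eq_cycle c b hs, ← map_mul, cycle_mul_eq_zero c b hcb.symm]
    · have rotate : B.cycle k b * pA k s t b = pA k s t b * B.cycle k (B.next b) := by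
        rw [cycle, cycle, B.len_next, ← walk_succ' B.tgt_eq, walk_succ, B.iterate_len]
      obtain ⟨n, hn⟩ : ∃ n, B.len c = n + 1 :=
        Nat.exists_eq_succ_of_ne_zero (by have := B.two_le_len c; lia)
      rw [rotate, map_mul, cycle_eq_cycle (B.next b) c (by rw [hs, B.tgt_eq]), ← map_mul, cycle, hn,
        walk_succ' B.tgt_eq, ← mul_assoc, map_mul, mul_eq_zero b c hcb, zero_mul]
  · exact cycle_mul_eq_zero a b hba

end

variable (k : Type) [Field k]

variable {k} in
theorem mkAlgHom_fa2 {E : Type} {s t : E → Fin 2} (a : E) :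
    RingQuot.mkAlgHom k (PathRel k (Fin 2) E s t) (fa2 k E a) = pA k s t a :=
  rfl

theorem exists_isDefinedBy_rels1 (B : BrauerData src1 tgt1) :
    ∃ m, 1 ≤ m ∧ B.IsDefinedBy (rels1 k m) := by
  have hnext : B.next = ![1, 0] := by
    have := B.tgt_eq
    generalize B.next = σ at this
    revert σ
    decide
  obtain ⟨m, hm, hcycle⟩ := B.exists_cycle_eq_pow (k := k) (a := 0) two_ne_zero
    (by rw [hnext]; decide) (by rw [hnext]; decide)
  refine ⟨m, hm, fun C _ _ ρ => ?_⟩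
  rw [relations_iff_of_injective (by decide), Fin.forall_fin_two, hcycle 0 0 rfl,
    hcycle 1 1 (by rw [hnext]; rfl)]
  simp [rels1, mkAlgHom_fa2, hnext, walk_succ, walk_zero, pV_src_mul_pA]

theorem next_eq_of_src2_tgt2 (B : BrauerData src2 tgt2) :
    B.next = ![1, 0, 2] ∨ B.next = ![1, 2, 0] := by
  have shapes : ∀ σ : Fin 3 → Fin 3, (∀ a, tgt2 a = src2 (σ a)) → Function.Injective σ →
      σ = ![1, 0, 2] ∨ σ = ![1, 2, 0] := by decide
  exact shapes _ B.tgt_eq B.next_injective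

set_option maxRecDepth 4000 in
theorem next_eq_of_src3_tgt3 (B : BrauerData src3 tgt3) :
    B.next = ![2, 3, 0, 1] ∨ B.next = ![2, 3, 1, 0] ∨ B.next = ![3, 2, 1, 0] ∨
      B.next = ![3, 2, 0, 1] := by
  have shapes : ∀ σ : Fin 4 → Fin 4, (∀ a, tgt3 a = src3 (σ a)) → Function.Injective σ →
      σ = ![2, 3, 0, 1] ∨ σ = ![2, 3, 1, 0] ∨ σ = ![3, 2, 1, 0] ∨ σ = ![3, 2, 0, 1] := by decide
  exact shapes _ B.tgt_eq B.next_injective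

set_option maxRecDepth 4000 in
theorem next_eq_of_src4_tgt4 (B : BrauerData src4 tgt4) :
    B.next = ![1, 0, 2, 3] ∨ B.next = ![1, 2, 0, 3] ∨ B.next = ![3, 0, 2, 1] ∨
      B.next = ![3, 2, 0, 1] := by
  have shapes : ∀ σ : Fin 4 → Fin 4, (∀ a, tgt4 a = src4 (σ a)) → Function.Injective σ →
      σ = ![1, 0, 2, 3] ∨ σ = ![1, 2, 0, 3] ∨ σ = ![3, 0, 2, 1] ∨ σ = ![3, 2, 0, 1] := by decide
  exact shapes _ B.tgt_eq B.next_injective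

section

variable {k} {C : Type} [Ring C] [Algebra k C]

theorem relations_src2_iff {B : BrauerData src2 tgt2}
    {ρ : PathAlg k (Fin 2) (Fin 3) src2 tgt2 →ₐ[k] C} :
    B.Relations ρ ↔
      (∀ a b, tgt2 a = src2 b → b ≠ B.next a → ρ (pA k src2 tgt2 a * pA k src2 tgt2 b) = 0) ∧
        ρ (B.cycle k 2) = ρ (B.cycle k 0) := by
  have branching : ∀ a, (∃ b, b ≠ a ∧ src2 b = src2 a) ∨ ∃ b, b ≠ B.next a ∧ src2 b = tgt2 a := by
    obtain hnext | hnext := B.next_eq_of_src2_tgt2 <;> rw [hnext] <;> decide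
  rw [relations_iff_of_branching branching]
  simp +decide [Fin.forall_fin_succ (n := 2), Fin.forall_fin_two, eq_comm (a := ρ (B.cycle k 0))]

theorem relations_src3_iff {B : BrauerData src3 tgt3}
    {ρ : PathAlg k (Fin 2) (Fin 4) src3 tgt3 →ₐ[k] C} :
    B.Relations ρ ↔
      (∀ a b, tgt3 a = src3 b → b ≠ B.next a → ρ (pA k src3 tgt3 a * pA k src3 tgt3 b) = 0) ∧
        ρ (B.cycle k 0) = ρ (B.cycle k 1) ∧ ρ (B.cycle k 2) = ρ (B.cycle k 3) := by
  have branching : ∀ a, ∃ b, b ≠ a ∧ src3 b = src3 a := by decide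
  rw [relations_iff_of_branching fun a => Or.inl (branching a)]
  simp +decide [Fin.forall_fin_succ, eq_comm (a := ρ (B.cycle k 1)) (b := ρ (B.cycle k 0)),
    eq_comm (a := ρ (B.cycle k 3)) (b := ρ (B.cycle k 2))]

theorem relations_src4_iff {B : BrauerData src4 tgt4}
    {ρ : PathAlg k (Fin 2) (Fin 4) src4 tgt4 →ₐ[k] C} :
    B.Relations ρ ↔
      (∀ a b, tgt4 a = src4 b → b ≠ B.next a → ρ (pA k src4 tgt4 a * pA k src4 tgt4 b) = 0) ∧
        ρ (B.cycle k 2) = ρ (B.cycle k 0) ∧ ρ (B.cycle k 1) = ρ (B.cycle k 3) := by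
  have branching : ∀ a, ∃ b, b ≠ a ∧ src4 b = src4 a := by decide
  rw [relations_iff_of_branching fun a => Or.inl (branching a)]
  simp +decide +contextual [Fin.forall_fin_succ,
    eq_comm (a := ρ (B.cycle k 0)) (b := ρ (B.cycle k 2)),
    eq_comm (a := ρ (B.cycle k 3)) (b := ρ (B.cycle k 1))]

end

theorem exists_isDefinedBy_rels2a (B : BrauerData src2 tgt2) (hnext : B.next = ![1, 0, 2]) :
    ∃ p q, 1 ≤ p ∧ 1 ≤ q ∧ B.IsDefinedBy (rels2a k p q) := by
  obtain ⟨p, hp, hγ⟩ := B.exists_cycle_eq_pow (k := k) (a := 2) one_ne_zero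
    (by rw [hnext]; decide) (by rw [hnext]; decide)
  obtain ⟨q, hq, hα⟩ := B.exists_cycle_eq_pow (k := k) (a := 0) two_ne_zero
    (by rw [hnext]; decide) (by rw [hnext]; decide)
  refine ⟨p, q, hp, hq, fun C _ _ ρ => ?_⟩
  rw [relations_src2_iff, hα 0 0 rfl, hγ 0 2 rfl, hnext]
  simp +decide [Fin.forall_fin_succ, rels2a, mkAlgHom_fa2, sub_eq_zero, walk_succ, walk_zero,
    walk_one, pV_src_mul_pA, and_assoc]

theorem exists_isDefinedBy_rels2b (B : BrauerData src2 tgt2) (hnext : B.next = ![1, 2, 0]) :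
    ∃ m, 1 ≤ m ∧ B.IsDefinedBy (rels2b k m) := by
  obtain ⟨m, hm, hcycle⟩ := B.exists_cycle_eq_pow (k := k) (a := 0) three_ne_zero
    (by rw [hnext]; decide) (by rw [hnext]; decide)
  refine ⟨m, hm, fun C _ _ ρ => ?_⟩
  rw [relations_src2_iff, hcycle 0 0 rfl, hcycle 2 2 (by rw [hnext]; rfl), hnext]
  simp +decide [Fin.forall_fin_succ, rels2b, mkAlgHom_fa2, sub_eq_zero, walk_succ, walk_zero,
    pV_src_mul_pA, and_assoc]

theorem exists_isDefinedBy_rels3a (B : BrauerData src3 tgt3) (hnext : B.next = ![2, 3, 0, 1]) :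
    ∃ p q, 1 ≤ p ∧ 1 ≤ q ∧ B.IsDefinedBy (rels3a k p q) := by
  obtain ⟨p, hp, hα⟩ := B.exists_cycle_eq_pow (k := k) (a := 0) two_ne_zero
    (by rw [hnext]; decide) (by rw [hnext]; decide)
  obtain ⟨q, hq, hα'⟩ := B.exists_cycle_eq_pow (k := k) (a := 1) two_ne_zero
    (by rw [hnext]; decide) (by rw [hnext]; decide)
  refine ⟨p, q, hp, hq, fun C _ _ ρ => ?_⟩
  rw [relations_src3_iff, hα 0 0 rfl, hα 1 2 (by rw [hnext]; rfl), hα' 0 1 rfl,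
    hα' 1 3 (by rw [hnext]; rfl), hnext]
  constructor <;>
    simp +decide +contextual [Fin.forall_fin_succ, rels3a, mkAlgHom_fa2, sub_eq_zero, walk_succ,
      walk_zero, pV_src_mul_pA]

theorem exists_isDefinedBy_rels3b (B : BrauerData src3 tgt3) (hnext : B.next = ![2, 3, 1, 0]) :
    ∃ m, 1 ≤ m ∧ B.IsDefinedBy (rels3b k m) := by
  obtain ⟨m, hm, hcycle⟩ := B.exists_cycle_eq_pow (k := k) (a := 0) four_ne_zero
    (by rw [hnext]; decide) (by rw [hnext]; decide)
  refine ⟨m, hm, fun C _ _ ρ => ?_⟩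
  rw [relations_src3_iff, hcycle 0 0 rfl, hcycle 1 2 (by rw [hnext]; rfl),
    hcycle 2 1 (by rw [hnext]; rfl), hcycle 3 3 (by rw [hnext]; rfl), hnext]
  constructor <;>
    simp +decide +contextual [Fin.forall_fin_succ, rels3b, mkAlgHom_fa2, sub_eq_zero, walk_succ,
      walk_zero, pV_src_mul_pA]

theorem exists_isDefinedBy_rels4a (B : BrauerData src4 tgt4) (hnext : B.next = ![1, 0, 2, 3]) :
    ∃ p q r, 1 ≤ p ∧ 1 ≤ q ∧ 1 ≤ r ∧ B.IsDefinedBy (rels4a k p q r) := by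
  obtain ⟨p, hp, hα⟩ := B.exists_cycle_eq_pow (k := k) (a := 0) two_ne_zero
    (by rw [hnext]; decide) (by rw [hnext]; decide)
  obtain ⟨q, hq, hγ⟩ := B.exists_cycle_eq_pow (k := k) (a := 2) one_ne_zero
    (by rw [hnext]; decide) (by rw [hnext]; decide)
  obtain ⟨r, hr, hδ⟩ := B.exists_cycle_eq_pow (k := k) (a := 3) one_ne_zero
    (by rw [hnext]; decide) (by rw [hnext]; decide)
  refine ⟨p, q, r, hp, hq, hr, fun C _ _ ρ => ?_⟩
  rw [relations_src4_iff, eq_comm (a := ρ (B.cycle k 2)), hα 0 0 rfl,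
    hα 1 1 (by rw [hnext]; rfl), hγ 0 2 rfl, hδ 0 3 rfl, hnext]
  constructor <;>
    simp +decide +contextual [Fin.forall_fin_succ, rels4a, mkAlgHom_fa2, sub_eq_zero, walk_succ,
      walk_zero, walk_one, pV_src_mul_pA]

theorem exists_isDefinedBy_rels4b (B : BrauerData src4 tgt4) (hnext : B.next = ![1, 2, 0, 3]) :
    ∃ p q, 1 ≤ p ∧ 1 ≤ q ∧ B.IsDefinedBy (rels4b k p q) := by
  obtain ⟨p, hp, hα⟩ := B.exists_cycle_eq_pow (k := k) (a := 0) three_ne_zero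
    (by rw [hnext]; decide) (by rw [hnext]; decide)
  obtain ⟨q, hq, hδ⟩ := B.exists_cycle_eq_pow (k := k) (a := 3) one_ne_zero
    (by rw [hnext]; decide) (by rw [hnext]; decide)
  refine ⟨p, q, hp, hq, fun C _ _ ρ => ?_⟩
  rw [relations_src4_iff, hα 0 0 rfl, hα 1 1 (by rw [hnext]; rfl),
    hα 2 2 (by rw [hnext]; rfl), hδ 0 3 rfl, hnext]
  constructor <;>
    simp +decide +contextual [Fin.forall_fin_succ, rels4b, mkAlgHom_fa2, sub_eq_zero, walk_succ,
      walk_zero, walk_one, pV_src_mul_pA]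

theorem exists_isDefinedBy_rels4c (B : BrauerData src4 tgt4) (hnext : B.next = ![3, 2, 0, 1]) :
    ∃ m, 1 ≤ m ∧ B.IsDefinedBy (rels4c k m) := by
  obtain ⟨m, hm, hcycle⟩ := B.exists_cycle_eq_pow (k := k) (a := 0) four_ne_zero
    (by rw [hnext]; decide) (by rw [hnext]; decide)
  refine ⟨m, hm, fun C _ _ ρ => ?_⟩
  rw [relations_src4_iff, and_comm (b := ρ (B.cycle k 1) = _), hcycle 0 0 rfl,
    hcycle 1 3 (by rw [hnext]; rfl), hcycle 2 1 (by rw [hnext]; rfl),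
    hcycle 3 2 (by rw [hnext]; rfl), hnext]
  simp +decide [Fin.forall_fin_succ, rels4c, mkAlgHom_fa2, sub_eq_zero, walk_succ, walk_zero,
    pV_src_mul_pA, and_assoc]

theorem exists_isDefinedBy_rels2a_or_rels2b (B : BrauerData src2 tgt2) :
    (∃ p q, 1 ≤ p ∧ 1 ≤ q ∧ B.IsDefinedBy (rels2a k p q)) ∨
      ∃ m, 1 ≤ m ∧ B.IsDefinedBy (rels2b k m) :=
  B.next_eq_of_src2_tgt2.imp (exists_isDefinedBy_rels2a k B) (exists_isDefinedBy_rels2b k B)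

theorem exists_isDefinedBy_rels3a_or_rels3b (B : BrauerData src3 tgt3) :
    ∃ f : QuiverIso src3 tgt3 src3 tgt3,
      (∃ p q, 1 ≤ p ∧ 1 ≤ q ∧ (B.comap f).IsDefinedBy (rels3a k p q)) ∨
        ∃ m, 1 ≤ m ∧ (B.comap f).IsDefinedBy (rels3b k m) := by
  let swap : QuiverIso src3 tgt3 src3 tgt3 :=
    { vertex := .refl _, arrow := .swap 2 3, src_arrow := by decide, tgt_arrow := by decide }
  obtain hnext | hnext | hnext | hnext := B.next_eq_of_src3_tgt3
  · exact ⟨.refl _ _, Or.inl (exists_isDefinedBy_rels3a k _ hnext)⟩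
  · exact ⟨.refl _ _, Or.inr (exists_isDefinedBy_rels3b k _ hnext)⟩
  · refine ⟨swap, Or.inl (exists_isDefinedBy_rels3a k _ (funext fun a => ?_))⟩
    rw [comap_next, hnext]
    revert a
    decide
  · refine ⟨swap, Or.inr (exists_isDefinedBy_rels3b k _ (funext fun a => ?_))⟩
    rw [comap_next, hnext]
    revert a
    decide

theorem exists_isDefinedBy_rels4a_or_rels4b_or_rels4c (B : BrauerData src4 tgt4) :
    ∃ f : QuiverIso src4 tgt4 src4 tgt4,
      (∃ p q r, 1 ≤ p ∧ 1 ≤ q ∧ 1 ≤ r ∧ (B.comap f).IsDefinedBy (rels4a k p q r)) ∨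
        (∃ p q, 1 ≤ p ∧ 1 ≤ q ∧ (B.comap f).IsDefinedBy (rels4b k p q)) ∨
          ∃ m, 1 ≤ m ∧ (B.comap f).IsDefinedBy (rels4c k m) := by
  let swap : QuiverIso src4 tgt4 src4 tgt4 :=
    { vertex := .swap 0 1, arrow := (Equiv.swap 0 1).trans (.swap 2 3)
      src_arrow := by decide, tgt_arrow := by decide }
  obtain hnext | hnext | hnext | hnext := B.next_eq_of_src4_tgt4
  · exact ⟨.refl _ _, Or.inl (exists_isDefinedBy_rels4a k _ hnext)⟩
  · exact ⟨.refl _ _, Or.inr (Or.inl (exists_isDefinedBy_rels4b k _ hnext))⟩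
  · refine ⟨swap, Or.inr (Or.inl (exists_isDefinedBy_rels4b k _ (funext fun a => ?_)))⟩
    rw [comap_next, hnext]
    revert a
    decide
  · exact ⟨.refl _ _, Or.inr (Or.inr (exists_isDefinedBy_rels4c k _ hnext))⟩

end BrauerData

theorem card_eq_add_card_of_fin_two {E : Type} [Fintype E] (p : E → Prop) [DecidablePred p]
    (f : E → Fin 2) :
    Finset.card {a | p a} = Finset.card {a | p a ∧ f a = 0} + Finset.card {a | p a ∧ f a = 1} := by
  rw [← Finset.card_filter_add_card_filter_not (s := {a | p a}) (fun a => f a = 0)]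
  simp only [Finset.filter_filter, show ∀ i : Fin 2, i ≠ 0 ↔ i = 1 by decide]

theorem BrauerData.arrowCount_eq_or {E : Type} [Fintype E] {s t : E → Fin 2}
    (B : BrauerData s t) (hconn : QConnected s t) (hout : ∀ v, Finset.card {a | s a = v} ≤ 2) :
    arrowCount s t = ![![0, 1], ![1, 0]] ∨ arrowCount s t = ![![1, 1], ![1, 0]] ∨
      arrowCount s t = ![![0, 1], ![1, 1]] ∨ arrowCount s t = ![![0, 2], ![2, 0]] ∨
      arrowCount s t = ![![1, 1], ![1, 1]] := by
  have card_src (v : Fin 2) :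
      Finset.card {a | s a = v} = arrowCount s t v 0 + arrowCount s t v 1 :=
    card_eq_add_card_of_fin_two _ t
  have card_tgt (w : Fin 2) :
      Finset.card {a | t a = w} = arrowCount s t 0 w + arrowCount s t 1 w := by
    rw [card_eq_add_card_of_fin_two _ s]
    simp only [and_comm, arrowCount]
  have balanced : arrowCount s t 0 1 = arrowCount s t 1 0 := by
    have := B.card_tgt_eq_card_src 0
    rw [card_src, card_tgt] at this
    lia
  have arrowCount_pos : 0 < arrowCount s t 0 1 := by
    obtain ⟨c, hc, -⟩ := exists_arrow_ne_of_qConnected hconn 0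
    have pos : 0 < arrowCount s t (s c) (t c) := Finset.card_pos.2 ⟨c, by simp⟩
    generalize s c = v, t c = w at hc pos
    revert v w
    simp [Fin.forall_fin_two, balanced]
  have out_zero := card_src 0 ▸ hout 0
  have out_one := card_src 1 ▸ hout 1
  simp only [funext_iff, Fin.forall_fin_two, Matrix.cons_val_zero, Matrix.cons_val_one]
  lia

theorem BrauerData.nonempty_quiverIso {E : Type} [Fintype E] {s t : E → Fin 2}
    (B : BrauerData s t) (hconn : QConnected s t) (hout : ∀ v, Finset.card {a | s a = v} ≤ 2) :
    Nonempty (QuiverIso src1 tgt1 s t) ∨ Nonempty (QuiverIso src2 tgt2 s t) ∨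
      Nonempty (QuiverIso src3 tgt3 s t) ∨ Nonempty (QuiverIso src4 tgt4 s t) := by
  obtain h | h | h | h | h := B.arrowCount_eq_or hconn hout
  · exact Or.inl (QuiverIso.nonempty_of_arrowCount_eq (.refl _) (by rw [h]; decide))
  · exact Or.inr (Or.inl (QuiverIso.nonempty_of_arrowCount_eq (.refl _) (by rw [h]; decide)))
  · exact Or.inr (Or.inl (QuiverIso.nonempty_of_arrowCount_eq (.swap 0 1) (by rw [h]; decide)))
  · exact Or.inr (Or.inr (Or.inl
      (QuiverIso.nonempty_of_arrowCount_eq (.refl _) (by rw [h]; decide))))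
  · exact Or.inr (Or.inr (Or.inr
      (QuiverIso.nonempty_of_arrowCount_eq (.refl _) (by rw [h]; decide))))

end TwoVertexClassification

/-- A connected two-point symmetric special biserial algebra `A = kQ/I`
(`I` admissible) is isomorphic to one of the listed quotients of path algebras, for suitable
positive integers for which the listed relations generate an admissible ideal. -/
theorem statement16 (k : Type) [Field k] [IsAlgClosed k]
    (mE : ℕ) (s t : Fin mE → Fin 2) (hconn : QConnected s t)
    (I : Submodule k (PathAlg k (Fin 2) (Fin mE) s t)) (hI : IsAdmissible k s t I)
    (hsym : IsSymmetricAlgebra' k (PathQuot k s t I))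
    (hsb : SpecialBiserialPres k s t (A := PathQuot k s t I) (pathQuotMap k s t I)) :
    (∃ m : ℕ, 1 ≤ m ∧ RelsAdmissible k src1 tgt1 (rels1 k m) ∧
      Nonempty (PathQuot k s t I ≃ₐ[k] PresAlg k (Fin 2) (Fin 2) src1 tgt1 (rels1 k m))) ∨
    (∃ p q : ℕ, 1 ≤ p ∧ 1 ≤ q ∧ RelsAdmissible k src2 tgt2 (rels2a k p q) ∧
      Nonempty (PathQuot k s t I ≃ₐ[k] PresAlg k (Fin 2) (Fin 3) src2 tgt2 (rels2a k p q))) ∨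
    (∃ m : ℕ, 1 ≤ m ∧ RelsAdmissible k src2 tgt2 (rels2b k m) ∧
      Nonempty (PathQuot k s t I ≃ₐ[k] PresAlg k (Fin 2) (Fin 3) src2 tgt2 (rels2b k m))) ∨
    (∃ p q : ℕ, 1 ≤ p ∧ 1 ≤ q ∧ RelsAdmissible k src3 tgt3 (rels3a k p q) ∧
      Nonempty (PathQuot k s t I ≃ₐ[k] PresAlg k (Fin 2) (Fin 4) src3 tgt3 (rels3a k p q))) ∨
    (∃ m : ℕ, 1 ≤ m ∧ RelsAdmissible k src3 tgt3 (rels3b k m) ∧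
      Nonempty (PathQuot k s t I ≃ₐ[k] PresAlg k (Fin 2) (Fin 4) src3 tgt3 (rels3b k m))) ∨
    (∃ p q r : ℕ, 1 ≤ p ∧ 1 ≤ q ∧ 1 ≤ r ∧ RelsAdmissible k src4 tgt4 (rels4a k p q r) ∧
      Nonempty (PathQuot k s t I ≃ₐ[k] PresAlg k (Fin 2) (Fin 4) src4 tgt4 (rels4a k p q r))) ∨
    (∃ p q : ℕ, 1 ≤ p ∧ 1 ≤ q ∧ RelsAdmissible k src4 tgt4 (rels4b k p q) ∧
      Nonempty (PathQuot k s t I ≃ₐ[k] PresAlg k (Fin 2) (Fin 4) src4 tgt4 (rels4b k p q))) ∨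
    (∃ m : ℕ, 1 ≤ m ∧ RelsAdmissible k src4 tgt4 (rels4c k m) ∧
      Nonempty (PathQuot k s t I ≃ₐ[k] PresAlg k (Fin 2) (Fin 4) src4 tgt4 (rels4c k m))) := by
  obtain ⟨B, π, hπ⟩ := (isAdmissiblePresentation_pathQuotMap hI).exists_brauerData_isPresentation
    hsym hconn hsb.2.2.1 hsb.2.2.2
  obtain ⟨⟨f⟩⟩ | ⟨⟨f⟩⟩ | ⟨⟨f⟩⟩ | ⟨⟨f⟩⟩ := B.nonempty_quiverIso hconn hsb.1
  · obtain ⟨m, hm, hdef⟩ := (B.comap f).exists_isDefinedBy_rels1 k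
    exact Or.inl ⟨m, hm, (hπ.comap f).relsAdmissible_and_nonempty_algEquiv (by decide) hdef⟩
  · have present {rels} := (hπ.comap f).relsAdmissible_and_nonempty_algEquiv (rels := rels)
      (by decide)
    obtain ⟨p, q, hp, hq, hdef⟩ | ⟨m, hm, hdef⟩ := (B.comap f).exists_isDefinedBy_rels2a_or_rels2b k
    · exact Or.inr (Or.inl ⟨p, q, hp, hq, present hdef⟩)
    · exact Or.inr (Or.inr (Or.inl ⟨m, hm, present hdef⟩))
  · obtain ⟨g, hg⟩ := (B.comap f).exists_isDefinedBy_rels3a_or_rels3b k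
    have present {rels} := ((hπ.comap f).comap g).relsAdmissible_and_nonempty_algEquiv
      (rels := rels) (by decide)
    obtain ⟨p, q, hp, hq, hdef⟩ | ⟨m, hm, hdef⟩ := hg
    · exact Or.inr (Or.inr (Or.inr (Or.inl ⟨p, q, hp, hq, present hdef⟩)))
    · exact Or.inr (Or.inr (Or.inr (Or.inr (Or.inl ⟨m, hm, present hdef⟩))))
  · obtain ⟨g, hg⟩ := (B.comap f).exists_isDefinedBy_rels4a_or_rels4b_or_rels4c k
    have present {rels} := ((hπ.comap f).comap g).relsAdmissible_and_nonempty_algEquiv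
      (rels := rels) (by decide)
    refine Or.inr (Or.inr (Or.inr (Or.inr (Or.inr ?_))))
    obtain ⟨p, q, r, hp, hq, hr, hdef⟩ | ⟨p, q, hp, hq, hdef⟩ | ⟨m, hm, hdef⟩ := hg
    · exact Or.inl ⟨p, q, r, hp, hq, hr, present hdef⟩
    · exact Or.inr (Or.inl ⟨p, q, hp, hq, present hdef⟩)
    · exact Or.inr (Or.inr ⟨m, hm, present hdef⟩)

end
end QH
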